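/- arXiv:2303.03345 — 3 statements merged into one kernel-verified Lean document; each statement's English description precedes it below -/
import Mathlib

section
/- There exist constants C₀ ≥ 1 and c₀ > 0 (depending only on h and the choice of the roots z_p) such that the following holds. Let d, N be positive integers, let A ⊆ {1,…,N} be h_d-free with density σ = |A|/N, let ν ∈ [0,1), and let K ≥ 1 and q ≥ 1 satisfy ν·σ·N ≥ C₀·K·λ(q). Suppose that ∑_{1 ≤ a ≤ q, gcd(a,q)=1} ∫_{𝔐_{a,q}(N,K)} | 1̂_A(γ) − σ·1̂_{[N]}(γ) |² dγ ≥ ν·σ·|A|. Then there exist a positive integer N* ≥ c₀·ν·σ·N/(K·λ(q)) and an h_{qd}-free subset A* ⊆ {1,…,N*} whose density σ* = |A*|/N* satisfies σ* ≥ (1 + ν/73)·σ. -/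
/-- `e(x) = e^{2πix}`. -/
noncomputable def e (x : ℝ) : ℂ := Complex.exp (2 * Real.pi * Complex.I * x)

lemma e_add (x y : ℝ) : e (x + y) = e x * e y := by
  unfold e; rw [← Complex.exp_add]; congr 1; push_cast; ring

lemma e_conj (x : ℝ) : (starRingEnd ℂ) (e x) = e (-x) := by
  unfold e; rw [← Complex.exp_conj]; congr 1
  simp [Complex.conj_ofNat]

lemma e_int (n : ℤ) : e n = 1 := by
  unfold e; rw [Complex.exp_eq_one_iff]; exact ⟨n, by push_cast; ring⟩

lemma e_norm (x : ℝ) : ‖e x‖ = 1 := by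
  unfold e
  rw [Complex.norm_exp]; simp

lemma e_re (x : ℝ) : (e x).re = Real.cos (2 * Real.pi * x) := by
  unfold e
  rw [show (2 * Real.pi * Complex.I * x : ℂ) = ((2 * Real.pi * x : ℝ) : ℂ) * Complex.I by
    push_cast; ring, Complex.exp_ofReal_mul_I_re]

lemma e_cont : Continuous e := by unfold e; fun_prop

lemma e_integral (k : ℤ) (t : ℝ) : ∫ γ in t..(t+1), e (k * γ) = if k = 0 then 1 else 0 := by
  split_ifs with h
  · subst h
    simp [e]
  · have hc : (2 * Real.pi * Complex.I * k : ℂ) ≠ 0 := by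
      simp [h, Real.pi_ne_zero]
    have h1 : ∀ γ : ℝ, e (k * γ) = Complex.exp ((2 * Real.pi * Complex.I * k : ℂ) * γ) := by
      intro γ; unfold e; congr 1; push_cast; ring
    simp_rw [h1]
    rw [integral_exp_mul_complex hc]
    rw [← h1, ← h1, mul_add, e_add, mul_one, e_int]
    simp

lemma parseval (S : Finset ℤ) (c : ℤ → ℝ) (t : ℝ) :
    ∫ γ in t..(t+1), ‖∑ x ∈ S, (c x : ℂ) * e (x * γ)‖ ^ 2 = ∑ x ∈ S, c x ^ 2 := by
  have hc := e_cont
  rw [← Complex.ofReal_inj, ← intervalIntegral.integral_ofReal]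
  have h1 : ∀ γ : ℝ, ((‖∑ x ∈ S, (c x : ℂ) * e (x * γ)‖ ^ 2 : ℝ) : ℂ) =
      ∑ x ∈ S, ∑ y ∈ S, ((c x : ℂ) * c y) * e (((x - y : ℤ) : ℝ) * γ) := by
    intro γ
    push_cast
    rw [← Complex.mul_conj', map_sum, Finset.sum_mul_sum]
    refine Finset.sum_congr rfl fun x _ => Finset.sum_congr rfl fun y _ => ?_
    rw [map_mul, e_conj, Complex.conj_ofReal, sub_mul, sub_eq_add_neg, e_add]
    ring
  simp_rw [h1]
  rw [intervalIntegral.integral_finsetSum]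
  · rw [Complex.ofReal_sum]
    refine Finset.sum_congr rfl fun x hx => ?_
    rw [intervalIntegral.integral_finsetSum]
    · simp_rw [intervalIntegral.integral_const_mul, e_integral]
      rw [Finset.sum_eq_single x]
      · simp [sq]
      · intro y _ hy
        rw [if_neg (by omega)]; simp
      · exact fun h => absurd hx h
    · intro y _
      apply Continuous.intervalIntegrable; fun_prop
  · intro y _
    apply Continuous.intervalIntegrable; fun_prop

lemma shift_sum {M : Type*} [AddCommMonoid M] (N L l j : ℕ) (hj : j ∈ Finset.Icc 1 L) (g : ℤ → M)
    (hg : ∀ n, n ∉ Finset.Icc (1:ℤ) N → g n = 0) :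
    ∑ x ∈ Finset.Icc (1 - (l * L : ℕ) : ℤ) N, g (x + (l * j : ℕ)) = ∑ n ∈ Finset.Icc (1:ℤ) N, g n := by
  have hjl : l * j ≤ l * L := Nat.mul_le_mul_left _ (Finset.mem_Icc.1 hj).2
  have hm := Finset.sum_map (Finset.Icc (1 - (l * L : ℕ) : ℤ) N) (addRightEmbedding ((l * j : ℕ) : ℤ)) g
  simp only [addRightEmbedding_apply] at hm
  rw [← hm]
  symm
  apply Finset.sum_subset
  · intro n hn
    rw [Finset.mem_Icc] at hn
    rw [Finset.mem_map]
    refine ⟨n - (l * j : ℕ), ?_, by simp⟩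
    rw [Finset.mem_Icc]
    omega
  · intro n _ hn
    exact hg n hn

/-- disjoint arcs -/
lemma arcs_le (q : ℕ) (hq : 1 ≤ q) (s : Finset ℕ) (hs : s ⊆ Finset.Icc 1 q) (δ : ℝ)
    (hδ : δ < 1 / (2 * q)) (F : ℝ → ℝ) (hF : Continuous F) (h0 : ∀ x, 0 ≤ F x) :
    ∑ a ∈ s, ∫ γ in Set.Icc ((a : ℝ) / q - δ) ((a : ℝ) / q + δ), F γ ≤
      ∫ γ in (1 / (2 * q) : ℝ)..(1 / (2 * q) + 1), F γ := by
  have hq0 : (0:ℝ) < q := by exact_mod_cast hq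
  rw [intervalIntegral.integral_of_le (by linarith)]
  rw [← MeasureTheory.integral_biUnion_finset]
  · apply MeasureTheory.setIntegral_mono_set
    · exact (hF.integrableOn_Icc).mono_set Set.Ioc_subset_Icc_self
    · exact Filter.Eventually.of_forall h0
    · refine LE.le.eventuallyLE ?_
      intro γ hγ
      simp only [Set.mem_iUnion] at hγ
      obtain ⟨a, ha, h1, h2⟩ := hγ
      obtain ⟨ha1, ha2⟩ := Finset.mem_Icc.1 (hs ha)
      have e1 : 1 / (q:ℝ) ≤ a / q := by gcongr; exact_mod_cast ha1
      have e2 : (a:ℝ) / q ≤ 1 := by rw [div_le_one hq0]; exact_mod_cast ha2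
      have e3 : 1 / (q:ℝ) = 2 * (1 / (2 * q)) := by field_simp
      constructor <;> linarith
  · intro _ _; exact measurableSet_Icc
  · intro a _ b _ hab
    rw [Function.onFun, Set.disjoint_left]
    rintro γ ⟨h1, h2⟩ ⟨h3, h4⟩
    have e3 : 1 / (q:ℝ) = 2 * (1 / (2 * q)) := by field_simp
    rcases lt_or_gt_of_ne hab with hab | hab
    · have : ((a:ℝ) + 1) / q ≤ b / q := by gcongr; exact_mod_cast hab
      rw [add_div] at this
      linarith
    · have : ((b:ℝ) + 1) / q ≤ a / q := by gcongr; exact_mod_cast hab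
      rw [add_div] at this
      linarith
  · intro a _
    exact hF.integrableOn_Icc

/-- lower bound for the progression sum -/
lemma prog_lower (L l q a : ℕ) (hq : 1 ≤ q) (hl : q ∣ l) (δ γ : ℝ)
    (hγ : γ ∈ Set.Icc ((a : ℝ) / q - δ) ((a : ℝ) / q + δ)) (hδ : L * l * δ ≤ 1 / 8) :
    (L : ℝ) / 2 ≤ ‖∑ j ∈ Finset.Icc 1 L, e (-((l * j : ℕ) : ℝ) * γ)‖ := by
  have hq0 : (q:ℝ) ≠ 0 := by positivity
  refine le_trans ?_ (Complex.re_le_norm _)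
  rw [Complex.re_sum]
  have : ∀ j ∈ Finset.Icc 1 L, (1/2 : ℝ) ≤ (e (-((l * j : ℕ) : ℝ) * γ)).re := by
    intro j hj
    obtain ⟨u, rfl⟩ := hl
    have hθ : |γ - a / q| ≤ δ := by rw [abs_le]; constructor <;> linarith [hγ.1, hγ.2]
    have h0 : (0:ℝ) ≤ δ := (abs_nonneg _).trans hθ
    have e1 : (-((q * u * j : ℕ) : ℝ) * γ) = ((-(u * j * a : ℕ) : ℤ) : ℝ) +
        (-((q * u * j : ℕ) : ℝ) * (γ - a / q)) := by
      push_cast; field_simp; ring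
    rw [e1, e_add, e_int, one_mul, e_re]
    have hjL : (j:ℝ) ≤ L := by exact_mod_cast (Finset.mem_Icc.1 hj).2
    have h2 : |(-((q * u * j : ℕ) : ℝ) * (γ - a / q))| ≤ 1 / 8 := by
      rw [abs_mul, abs_neg, Nat.abs_cast]
      refine le_trans ?_ hδ
      push_cast
      calc (q * u * j * |γ - a / q| : ℝ) ≤ q * u * L * δ := by gcongr
        _ = _ := by ring
    rw [← Real.cos_pi_div_three, ← Real.cos_abs (2 * Real.pi * _)]
    apply Real.cos_le_cos_of_nonneg_of_le_pi (abs_nonneg _)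
    · linarith [Real.pi_pos]
    · rw [abs_mul, abs_of_pos (by positivity : 0 < 2 * Real.pi)]
      nlinarith [Real.pi_pos]
  have := Finset.sum_le_sum this
  simp at this
  simp; linarith

lemma conv_eq (N L l : ℕ) (f : ℤ → ℝ) (hf : ∀ n, n ∉ Finset.Icc (1:ℤ) N → f n = 0) (γ : ℝ) :
    ∑ x ∈ Finset.Icc (1 - (l * L : ℕ) : ℤ) N,
      ((∑ j ∈ Finset.Icc 1 L, f (x + (l * j : ℕ)) : ℝ) : ℂ) * e (x * γ) =
    (∑ j ∈ Finset.Icc 1 L, e (-((l * j : ℕ) : ℝ) * γ)) *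
      ∑ n ∈ Finset.Icc (1:ℤ) N, (f n : ℂ) * e (n * γ) := by
  simp_rw [Complex.ofReal_sum, Finset.sum_mul]
  rw [Finset.sum_comm]
  refine Finset.sum_congr rfl fun j hj => ?_
  rw [← shift_sum N L l j hj (fun n => (f n : ℂ) * e (n * γ)), Finset.mul_sum]
  · refine Finset.sum_congr rfl fun x _ => ?_
    rw [mul_left_comm, ← e_add]
    congr 2
    push_cast
    ring
  · intro n hn
    simp [hf n hn]

lemma l2_upper (N L l : ℕ) (A : Finset ℤ) (hA : A ⊆ Finset.Icc (1:ℤ) N) (σ T : ℝ) (hσ : 0 ≤ σ)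
    (hT : ∀ x : ℤ, ((∑ j ∈ Finset.Icc 1 L, if x + (l * j : ℕ) ∈ A then 1 else 0 : ℝ)) ≤ T) :
    ∑ x ∈ Finset.Icc (1 - (l * L : ℕ) : ℤ) N,
      (∑ j ∈ Finset.Icc 1 L, ((if x + (l * j : ℕ) ∈ A then 1 else 0 : ℝ) -
        σ * (if x + (l * j : ℕ) ∈ Finset.Icc (1:ℤ) N then 1 else 0))) ^ 2 ≤
    T * (L * A.card) - 2 * σ * (L * (L * A.card) - T * (l * L * L)) + σ ^ 2 * (L * (L * N)) := by
  set S := Finset.Icc (1 - (l * L : ℕ) : ℤ) N with hS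
  set α : ℤ → ℝ := fun x => ∑ j ∈ Finset.Icc 1 L, if x + (l * j : ℕ) ∈ A then 1 else 0 with hα
  set β : ℤ → ℝ := fun x => ∑ j ∈ Finset.Icc 1 L,
    if x + (l * j : ℕ) ∈ Finset.Icc (1:ℤ) N then 1 else 0 with hβ
  have hα0 : ∀ x, 0 ≤ α x := fun x => Finset.sum_nonneg fun j _ => by split_ifs <;> norm_num
  have hβ0 : ∀ x, 0 ≤ β x := fun x => Finset.sum_nonneg fun j _ => by split_ifs <;> norm_num
  have hβL : ∀ x, β x ≤ L := fun x => by
    have : β x ≤ ∑ j ∈ Finset.Icc 1 L, (1:ℝ) :=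
      Finset.sum_le_sum fun j _ => by split_ifs <;> norm_num
    simpa using this
  have sα : ∑ x ∈ S, α x = L * A.card := by
    rw [Finset.sum_comm]
    rw [Finset.sum_congr rfl fun j hj => shift_sum N L l j hj (fun n => if n ∈ A then (1:ℝ) else 0)
      (fun n hn => if_neg fun h => hn (hA h))]
    rw [Finset.sum_const, Finset.sum_ite_mem, Finset.inter_eq_right.2 hA]
    simp
  have sβ : ∑ x ∈ S, β x = L * N := by
    rw [Finset.sum_comm]
    rw [Finset.sum_congr rfl fun j hj => shift_sum N L l j hj
      (fun n => if n ∈ Finset.Icc (1:ℤ) N then (1:ℝ) else 0) (fun n hn => if_neg hn)]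
    rw [Finset.sum_const, Finset.sum_ite_mem, Finset.inter_self]
    simp
  have cS : (S.card : ℝ) = N + l * L := by
    have : S.card = N + l * L := by
      rw [hS, Int.card_Icc]; omega
    rw [this]; push_cast; ring
  have s1 : ∑ x ∈ S, α x ^ 2 ≤ T * (L * A.card) := by
    rw [← sα, Finset.mul_sum]
    exact Finset.sum_le_sum fun x _ => by nlinarith [hα0 x, hT x]
  have s2 : ∑ x ∈ S, α x * (L - β x) ≤ T * (l * L * L) := by
    calc ∑ x ∈ S, α x * (L - β x) ≤ ∑ x ∈ S, T * (L - β x) :=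
          Finset.sum_le_sum fun x _ => mul_le_mul_of_nonneg_right (hT x) (by linarith [hβL x])
      _ = T * (l * L * L) := by
          rw [← Finset.mul_sum, Finset.sum_sub_distrib, sβ, Finset.sum_const, nsmul_eq_mul, cS]
          ring
  have s3 : ∑ x ∈ S, β x ^ 2 ≤ L * (L * N) := by
    rw [← sβ, Finset.mul_sum]
    exact Finset.sum_le_sum fun x _ => by nlinarith [hβ0 x, hβL x]
  have key : ∀ x : ℤ, (∑ j ∈ Finset.Icc 1 L, ((if x + (l * j : ℕ) ∈ A then 1 else 0 : ℝ) -
        σ * (if x + (l * j : ℕ) ∈ Finset.Icc (1:ℤ) N then 1 else 0))) ^ 2 =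
      α x ^ 2 - 2 * σ * (L * α x - α x * (L - β x)) + σ ^ 2 * β x ^ 2 := by
    intro x
    rw [Finset.sum_sub_distrib, ← Finset.mul_sum]
    ring
  simp_rw [key]
  rw [Finset.sum_add_distrib, Finset.sum_sub_distrib, ← Finset.mul_sum, ← Finset.mul_sum,
    Finset.sum_sub_distrib, ← Finset.mul_sum, sα]
  have := mul_le_mul_of_nonneg_left s3 (sq_nonneg σ)
  have := mul_le_mul_of_nonneg_left s2 hσ
  linarith

lemma core (N L l q : ℕ) (hN : 0 < N) (hL : 0 < L) (hq : 1 ≤ q) (hl : q ∣ l) (hl0 : 0 < l)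
    (A : Finset ℤ)
    (hA : A ⊆ Finset.Icc (1:ℤ) N) (σ ν δ : ℝ) (hσ : σ = A.card / N) (hσ0 : 0 < σ)
    (hν : 0 < ν) (hν1 : ν < 1) (hδ : 64 * (L * l * δ) ≤ 1) (hνL : 64 * (l * L) ≤ ν * N)
    (s : Finset ℕ) (hs : s ⊆ Finset.Icc 1 q)
    (hmass : ν * σ * A.card ≤ ∑ a ∈ s, ∫ γ in Set.Icc ((a : ℝ) / q - δ) ((a : ℝ) / q + δ),
      ‖∑ n ∈ Finset.Icc (1:ℤ) N, (((if n ∈ A then 1 else 0 : ℝ) -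
        σ * (if n ∈ Finset.Icc (1:ℤ) N then 1 else 0) : ℝ) : ℂ) * e (n * γ)‖ ^ 2) :
    ∃ x : ℤ, (1 + ν / 73) * σ * L ≤
      ∑ j ∈ Finset.Icc 1 L, if x + (l * j : ℕ) ∈ A then (1:ℝ) else 0 := by
  by_contra! hcon
  have hec := e_cont
  have hN0 : (0:ℝ) < N := by exact_mod_cast hN
  have hL0 : (1:ℝ) ≤ L := by exact_mod_cast hL
  have hl1 : (1:ℝ) ≤ l := by exact_mod_cast hl0
  have hq0 : (1:ℝ) ≤ q := by exact_mod_cast hq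
  have hql : (q:ℝ) ≤ l := by exact_mod_cast Nat.le_of_dvd hl0 hl
  have hcard : (A.card : ℝ) = σ * N := by rw [hσ]; field_simp
  set f : ℤ → ℝ := fun n => (if n ∈ A then 1 else 0 : ℝ) -
        σ * (if n ∈ Finset.Icc (1:ℤ) N then 1 else 0) with hf
  have hf0 : ∀ n, n ∉ Finset.Icc (1:ℤ) N → f n = 0 := by
    intro n hn
    simp only [hf, if_neg hn, if_neg (fun h => hn (hA h))]; simp
  set G : ℝ → ℂ := fun γ => ∑ n ∈ Finset.Icc (1:ℤ) N, (f n : ℂ) * e (n * γ) with hG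
  set P : ℝ → ℂ := fun γ => ∑ j ∈ Finset.Icc 1 L, e (-((l * j : ℕ) : ℝ) * γ) with hP
  have hGc : Continuous G := by fun_prop
  have hPc : Continuous P := by fun_prop
  have hup := l2_upper N L l A hA σ _ hσ0.le (fun x => (hcon x).le)
  have hδ2 : δ < 1 / (2 * q) := by
    rw [lt_div_iff₀ (by positivity)]
    rcases le_or_gt δ 0 with h | h
    · nlinarith
    · have : (q:ℝ) * δ ≤ L * l * δ := by
        have : (q:ℝ) ≤ L * l := by nlinarith
        gcongr
      nlinarith
  have hpar := parseval (Finset.Icc (1 - (l * L : ℕ) : ℤ) N)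
    (fun x => ∑ j ∈ Finset.Icc 1 L, f (x + (l * j : ℕ))) (1 / (2 * q))
  simp_rw [conv_eq N L l f hf0] at hpar
  have harc := arcs_le q hq s hs δ hδ2 (fun γ => ‖P γ * G γ‖ ^ 2) (by fun_prop)
    (fun _ => by positivity)
  have hlow : (L / 2 : ℝ) ^ 2 * ∑ a ∈ s, ∫ γ in Set.Icc ((a : ℝ) / q - δ) ((a : ℝ) / q + δ),
      ‖G γ‖ ^ 2 ≤ ∑ a ∈ s, ∫ γ in Set.Icc ((a : ℝ) / q - δ) ((a : ℝ) / q + δ),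
      ‖P γ * G γ‖ ^ 2 := by
    rw [Finset.mul_sum]
    refine Finset.sum_le_sum fun a _ => ?_
    rw [← MeasureTheory.integral_const_mul]
    apply MeasureTheory.setIntegral_mono_on
    · exact Continuous.integrableOn_Icc (by fun_prop)
    · exact Continuous.integrableOn_Icc (by fun_prop)
    · exact measurableSet_Icc
    · intro γ hγ
      rw [norm_mul, mul_pow]
      have := prog_lower L l q a hq hl δ γ hγ (by linarith)
      gcongr
  have h3 : (L / 2 : ℝ) ^ 2 * (ν * σ * A.card) ≤ _ :=
    (mul_le_mul_of_nonneg_left hmass (by positivity)).trans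
      (hlow.trans (harc.trans (hpar.le.trans hup)))
  rw [hcard] at h3
  have hX : 0 < σ ^ 2 * L ^ 2 := by positivity
  have h4 : σ ^ 2 * L ^ 2 * (ν * N / 4) ≤
      σ ^ 2 * L ^ 2 * (ν / 73 * N + 2 * (1 + ν / 73) * (l * L)) := by
    linarith
  have h5 := le_of_mul_le_mul_left h4 hX
  have h6 : (1 + ν / 73) * (64 * (l * L)) ≤ 2 * (ν * N) :=
    mul_le_mul (by linarith) hνL (by positivity) (by norm_num)
  have : 0 < ν * N := by positivity
  linarith

lemma dvd_lam (h : Polynomial ℤ) (h0 : h ≠ 0)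
    (z : ∀ (p : ℕ) [Fact p.Prime], ℤ_[p])
    (hz : ∀ (p : ℕ) [Fact p.Prime], Polynomial.aeval (z p) h = 0)
    (lam : ℕ → ℕ) (hlam1 : lam 1 = 1)
    (hlamMul : ∀ a b : ℕ, lam (a * b) = lam a * lam b)
    (hlamP : ∀ (p : ℕ) [Fact p.Prime],
      lam p = p ^ Polynomial.rootMultiplicity (z p) (h.map (algebraMap ℤ ℤ_[p])))
    (q : ℕ) : q ≠ 0 → q ∣ lam q ∧ 0 < lam q := by
  induction q using Nat.recOnMul with
  | zero => simp
  | one => simp [hlam1]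
  | prime p hp =>
    intro _
    haveI : Fact p.Prime := ⟨hp⟩
    rw [hlamP p]
    refine ⟨dvd_pow_self _ ?_, pow_pos hp.pos _⟩
    have hinj : Function.Injective (algebraMap ℤ ℤ_[p]) := by
      rw [algebraMap_int_eq]; exact RingHom.injective_int _
    have hne : h.map (algebraMap ℤ ℤ_[p]) ≠ 0 := (Polynomial.map_ne_zero_iff hinj).2 h0
    apply ne_of_gt
    rw [Polynomial.rootMultiplicity_pos hne, Polynomial.IsRoot, Polynomial.eval_map_algebraMap]
    exact hz p
  | mul a b ha hb =>
    intro hab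
    obtain ⟨h1, h2⟩ := ha (left_ne_zero_of_mul hab)
    obtain ⟨h3, h4⟩ := hb (right_ne_zero_of_mul hab)
    rw [hlamMul]
    exact ⟨mul_dvd_mul h1 h3, Nat.mul_pos h2 h4⟩

lemma r_congr (z : ∀ (p : ℕ) [Fact p.Prime], ℤ_[p]) (r : ℕ → ℤ)
    (hrz : ∀ d : ℕ, 0 < d → ∀ (p : ℕ) [Fact p.Prime], ∀ α : ℕ, p ^ α ∣ d →
      (p : ℤ_[p]) ^ α ∣ (z p - (r d : ℤ_[p]))) (q d : ℕ) (hq : 0 < q) (hd : 0 < d) :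
    (d : ℤ) ∣ r (q * d) - r d := by
  rw [Int.natCast_dvd]
  apply (Nat.dvd_iff_prime_pow_dvd_dvd _ _).2
  intro p k hp hk
  haveI : Fact p.Prime := ⟨hp⟩
  have h1 := hrz d hd p k hk
  have h2 := hrz (q * d) (Nat.mul_pos hq hd) p k (hk.trans (dvd_mul_left _ _))
  have h3 := dvd_sub h1 h2
  rw [← Int.natCast_dvd]
  push_cast
  rw [← PadicInt.pow_p_dvd_int_iff]
  convert h3 using 1
  push_cast; ring

lemma free_transfer (h : Polynomial ℤ) (lam : ℕ → ℕ)
    (hlamMul : ∀ a b : ℕ, lam (a * b) = lam a * lam b)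
    (r : ℕ → ℤ) (hr : ∀ d : ℕ, 0 < d → -(d : ℤ) < r d ∧ r d ≤ 0)
    (H : ℕ → Polynomial ℤ)
    (hH : ∀ d : ℕ, 0 < d →
      Polynomial.C (lam d : ℤ) * H d =
        h.comp (Polynomial.C (r d) + Polynomial.C (d : ℤ) * Polynomial.X))
    (q d : ℕ) (hq : 0 < q) (hd : 0 < d) (hdvd : (d : ℤ) ∣ r (q * d) - r d)
    (hlam : 0 < lam d) (n : ℕ) (hn : 0 < n) :
    ∃ m : ℕ, 0 < m ∧ (lam q : ℤ) * (H (q * d)).eval (n : ℤ) = (H d).eval (m : ℤ) := by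
  obtain ⟨u, hu⟩ := hdvd
  have hqd := Nat.mul_pos hq hd
  have h1 := hr (q * d) hqd
  have h2 := hr d hd
  have hpos : 0 < u + q * n := by
    have h3 : (0:ℤ) < d * (u + q * n) := by
      have : ((q * d : ℕ) : ℤ) ≤ (q * d : ℕ) * n := by
        have : (1:ℤ) ≤ n := by exact_mod_cast hn
        nlinarith [Int.natCast_nonneg (q * d)]
      push_cast at this h1
      nlinarith
    exact pos_of_mul_pos_right h3 (by positivity)
  obtain ⟨m, hm⟩ := Int.eq_ofNat_of_zero_le hpos.le
  refine ⟨m, by omega, ?_⟩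
  have e1 := congrArg (Polynomial.eval (n : ℤ)) (hH (q * d) hqd)
  have e2 := congrArg (Polynomial.eval (m : ℤ)) (hH d hd)
  simp only [Polynomial.eval_mul, Polynomial.eval_C, Polynomial.eval_comp, Polynomial.eval_add,
    Polynomial.eval_X, hlamMul] at e1 e2
  have e3 : r (q * d) + ((q * d : ℕ) : ℤ) * n = r d + d * m := by
    change _ = (m:ℤ) at hm
    rw [← hm]; push_cast; linear_combination hu
  rw [e3, ← e2] at e1
  have hl : (lam d : ℤ) ≠ 0 := by exact_mod_cast hlam.ne'
  apply mul_left_cancel₀ hl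
  push_cast at e1
  linarith

lemma ghat_eq (N : ℕ) (A : Finset ℕ) (hA : A ⊆ Finset.Icc 1 N) (σ γ : ℝ) :
    (∑ n ∈ A, e ((n : ℝ) * γ)) - (σ : ℂ) * ∑ n ∈ Finset.Icc 1 N, e ((n : ℝ) * γ) =
    ∑ n ∈ Finset.Icc (1:ℤ) N, (((if n ∈ A.map Nat.castEmbedding then 1 else 0 : ℝ) -
        σ * (if n ∈ Finset.Icc (1:ℤ) N then 1 else 0) : ℝ) : ℂ) * e (n * γ) := by
  have hI : Finset.Icc (1:ℤ) N = (Finset.Icc 1 N).map Nat.castEmbedding := by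
    ext n
    simp only [Finset.mem_Icc, Finset.mem_map, Nat.castEmbedding_apply]
    constructor
    · rintro ⟨h1, h2⟩
      exact ⟨n.toNat, by omega, by omega⟩
    · rintro ⟨m, hm, rfl⟩
      omega
  rw [hI, Finset.sum_map]
  simp only [Finset.mem_map', Nat.castEmbedding_apply]
  rw [Finset.mul_sum, ← Finset.inter_eq_right.2 hA, ← Finset.sum_ite_mem, ← Finset.sum_sub_distrib]
  refine Finset.sum_congr rfl fun n hn => ?_
  have : (Nat.cast n : ℤ) ∈ Finset.map Nat.castEmbedding (Finset.Icc 1 N) := by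
    rw [← hI]; simpa using hn
  rw [if_pos this]
  have hn' : (n:ℤ) ∈ Finset.map Nat.castEmbedding (Finset.Icc 1 N ∩ A) ↔ n ∈ A := by
    have := Finset.mem_map' (a := n) (s := Finset.Icc 1 N ∩ A) (Nat.castEmbedding (R := ℤ))
    rw [Nat.castEmbedding_apply] at this
    rw [this]; simp only [Finset.mem_inter, hn, true_and]
  simp only [hn']
  split_ifs <;> push_cast <;> simp <;> ring

open scoped Classical in
/-- Lemma 5.1 (`L²` density increment): if the `L²` mass of `1̂_A - σ·1̂_{[N]}` on the arcs
`𝔐_{a,q}(N,K)` is at least `ν·σ·|A|`, then there is a longer-scale `h_{qd}`-free subset with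
density increased by a factor `1 + ν/73`. -/
theorem stmt14
    (k : ℕ) (hk : 0 < k)
    (h : Polynomial ℤ) (hdeg : h.natDegree = k) (hlead : 0 < h.leadingCoeff)
    (hint : ∀ q : ℕ, 0 < q → ∃ n : ℤ, (q : ℤ) ∣ h.eval n)
    (z : ∀ (p : ℕ) [Fact p.Prime], ℤ_[p])
    (hz : ∀ (p : ℕ) [Fact p.Prime], Polynomial.aeval (z p) h = 0)
    (lam : ℕ → ℕ) (hlam1 : lam 1 = 1)
    (hlamMul : ∀ a b : ℕ, lam (a * b) = lam a * lam b)
    (hlamP : ∀ (p : ℕ) [Fact p.Prime],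
      lam p = p ^ Polynomial.rootMultiplicity (z p) (h.map (algebraMap ℤ ℤ_[p])))
    (r : ℕ → ℤ)
    (hr : ∀ d : ℕ, 0 < d → -(d : ℤ) < r d ∧ r d ≤ 0)
    (hrz : ∀ d : ℕ, 0 < d → ∀ (p : ℕ) [Fact p.Prime], ∀ α : ℕ, p ^ α ∣ d →
      (p : ℤ_[p]) ^ α ∣ (z p - (r d : ℤ_[p])))
    (H : ℕ → Polynomial ℤ)
    (hH : ∀ d : ℕ, 0 < d →
      Polynomial.C (lam d : ℤ) * H d =
        h.comp (Polynomial.C (r d) + Polynomial.C (d : ℤ) * Polynomial.X))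
    :
    ∃ C₀ c₀ : ℝ, 1 ≤ C₀ ∧ 0 < c₀ ∧
      ∀ d N : ℕ, 0 < d → 0 < N → ∀ A : Finset ℕ, A ⊆ Finset.Icc 1 N →
        (∀ a ∈ A, ∀ b ∈ A, a ≠ b →
          ∀ n : ℕ, 0 < n → (a : ℤ) - (b : ℤ) ≠ (H d).eval (n : ℤ)) →
        let σ : ℝ := (A.card : ℝ) / N
        let ghat : ℝ → ℂ := fun γ =>
          (∑ n ∈ A, e ((n : ℝ) * γ)) - (σ : ℂ) * ∑ n ∈ Finset.Icc 1 N, e ((n : ℝ) * γ)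
        ∀ ν : ℝ, 0 ≤ ν → ν < 1 → ∀ K : ℝ, 1 ≤ K → ∀ q : ℕ, 1 ≤ q →
          C₀ * K * (lam q : ℝ) ≤ ν * σ * N →
          (∑ a ∈ (Finset.Icc 1 q).filter (fun a => Nat.gcd a q = 1),
              ∫ γ in Set.Icc ((a : ℝ) / q - K / N) ((a : ℝ) / q + K / N), ‖ghat γ‖ ^ 2) ≥
            ν * σ * A.card →
          ∃ Nst : ℕ, 0 < Nst ∧ c₀ * ν * σ * N / (K * (lam q : ℝ)) ≤ (Nst : ℝ) ∧
            ∃ Ast : Finset ℕ, Ast ⊆ Finset.Icc 1 Nst ∧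
              (∀ a ∈ Ast, ∀ b ∈ Ast, a ≠ b →
                ∀ n : ℕ, 0 < n → (a : ℤ) - (b : ℤ) ≠ (H (q * d)).eval (n : ℤ)) ∧
              (Ast.card : ℝ) / Nst ≥ (1 + ν / 73) * σ := by
  have h0 : h ≠ 0 := by rintro rfl; simp at hlead
  have hlam := dvd_lam h h0 z hz lam hlam1 hlamMul hlamP
  refine ⟨64, 1 / 128, by norm_num, by norm_num, ?_⟩
  intro d N hd hN A hA hfree σ ghat ν hν hν1 K hK q hq hC hmass
  obtain ⟨hql, hl0⟩ := hlam q (by omega)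
  set l := lam q with hl
  have hN0 : (0:ℝ) < N := by exact_mod_cast hN
  have hl1 : (1:ℝ) ≤ l := by exact_mod_cast hl0
  have hσ0 : 0 ≤ σ := by positivity
  have hcN : (A.card : ℝ) ≤ N := by
    have := Finset.card_le_card hA
    simp at this
    exact_mod_cast this
  have hσ1 : σ ≤ 1 := by
    simp only [σ]; rw [div_le_one hN0]; exact hcN
  have hKl : 1 ≤ K * l := by nlinarith
  have hpos : 0 < ν * σ * N := by nlinarith
  have hν0 : 0 < ν := by
    rcases hν.eq_or_lt with h | h
    · rw [← h] at hpos; simp at hpos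
    · exact h
  have hσpos : 0 < σ := by
    rcases hσ0.eq_or_lt with h | h
    · rw [← h] at hpos; simp at hpos
    · exact h
  have hνσ : ν * σ * N ≤ ν * N := by
    have : ν * σ ≤ ν := by nlinarith
    gcongr
  set X : ℝ := ν * N / (64 * (K * l)) with hX
  have hX1 : 1 ≤ X := by
    rw [hX, le_div_iff₀ (by positivity)]; linarith
  set L := ⌊X⌋₊ with hL
  have hLX : (L:ℝ) ≤ X := Nat.floor_le (by linarith)
  have hXL : X < L + 1 := Nat.lt_floor_add_one X
  have hL1 : 1 ≤ L := Nat.le_floor (by simpa using hX1)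
  have hL1' : (1:ℝ) ≤ L := by exact_mod_cast hL1
  have hLb : L * (64 * (K * l)) ≤ ν * N := by
    rwa [hX, le_div_iff₀ (by positivity)] at hLX
  have hA' : A.map Nat.castEmbedding ⊆ Finset.Icc (1:ℤ) N := by
    intro n hn
    rw [Finset.mem_map] at hn
    obtain ⟨m, hm, rfl⟩ := hn
    have := Finset.mem_Icc.1 (hA hm)
    simp only [Nat.castEmbedding_apply, Finset.mem_Icc]
    omega
  obtain ⟨x, hx⟩ := core N L l q hN hL1 hq hql hl0 (A.map Nat.castEmbedding) hA' σ ν (K / N)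
    (by simp [σ]) hσpos hν0 hν1
    (by
      rw [← mul_div_assoc, ← mul_div_assoc, div_le_one hN0]
      nlinarith)
    (by
      have : (l:ℝ) * L ≤ K * (l * L) := by
        have : (0:ℝ) ≤ l * L := by positivity
        nlinarith
      linarith) _ (Finset.filter_subset _ _)
    (by
      rw [Finset.card_map]
      simp_rw [← ghat_eq N A hA σ]
      exact hmass)
  refine ⟨L, hL1, ?_, (Finset.Icc 1 L).filter (fun j => x + (l * j : ℕ) ∈ A.map Nat.castEmbedding),
    Finset.filter_subset _ _, ?_, ?_⟩
  · have : 1 / 128 * ν * σ * N / (K * l) = (ν * σ * N) / (64 * (K * l)) / 2 := by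
      field_simp; norm_num
    rw [this]
    have : (ν * σ * N) / (64 * (K * l)) ≤ X := by rw [hX]; gcongr
    linarith
  · intro a ha b hb hab n hn heq
    obtain ⟨m, hm, hmn⟩ := free_transfer h lam hlamMul r hr H hH q d hq hd
      (r_congr z r hrz q d hq hd) (hlam d hd.ne').2 n hn
    obtain ⟨a', ha', ea⟩ := Finset.mem_map.1 (Finset.mem_filter.1 ha).2
    obtain ⟨b', hb', eb⟩ := Finset.mem_map.1 (Finset.mem_filter.1 hb).2
    rw [Nat.castEmbedding_apply] at ea eb
    push_cast at ea eb
    have hdiff : (a' : ℤ) - b' = l * ((a:ℤ) - b) := by rw [ea, eb]; ring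
    refine hfree a' ha' b' hb' ?_ m hm ?_
    · rintro rfl
      rw [sub_self] at hdiff
      have hl' : (l:ℤ) ≠ 0 := by exact_mod_cast hl0.ne'
      have := (mul_eq_zero.1 hdiff.symm).resolve_left hl'
      omega
    · rw [hdiff, heq, hmn]
  · rw [ge_iff_le, le_div_iff₀ (by linarith)]
    rw [Finset.sum_boole] at hx
    convert hx
end

section
/- There is an absolute constant C > 0 such that for all positive integers N and m, every nonempty subset A ⊆ {1,…,N} with density σ = |A|/N, and every finite set S ⊆ 𝕋, one has ∑_{γ ∈ S} |1̂_A(γ)| ≤ C·|A|·σ^{−1/(2m)}·E_{2m}(S; 1/(2N))^{1/(2m)}. -/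
/-- The distance from `x` to the nearest integer, i.e. the norm of the image of `x` in
`𝕋 = ℝ/ℤ`. -/
noncomputable def torusNorm (x : ℝ) : ℝ := |x - round x|
/-- The additive energy `E_{2m}(S;δ)`: the number of `2m`-tuples `(b₁,…,b_{2m}) ∈ S^{2m}`
with `‖b₁ + ⋯ + b_m − b_{m+1} − ⋯ − b_{2m}‖ ≤ δ` in `𝕋 = ℝ/ℤ`. -/
noncomputable def energy (m : ℕ) (S : Finset ℝ) (δ : ℝ) : ℕ := by
  classical
  exact ((Fintype.piFinset fun _ : Fin (2 * m) => S).filter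
    (fun b => torusNorm (∑ i : Fin (2 * m), if (i : ℕ) < m then b i else -b i) ≤ δ)).card


open MeasureTheory AddCircle in
lemma re_fourier_ge (N n : ℕ) (hN : 0 < N) (hn : n ≤ N) (u : UnitAddCircle)
    (hu : ‖u‖ ≤ 1 / (8 * N)) : 1 / 2 ≤ (fourier (n : ℤ) u).re := by
  obtain ⟨x, rfl⟩ := QuotientAddGroup.mk_surjective u
  change ‖((x : ℝ) : UnitAddCircle)‖ ≤ _ at hu
  rw [UnitAddCircle.norm_eq] at hu
  set y : ℝ := x - round x with hy
  have hxy : ((x : ℝ) : UnitAddCircle) = ((y : ℝ) : UnitAddCircle) := by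
    rw [hy, AddCircle.coe_sub]
    have : (((round x : ℤ) : ℝ) : UnitAddCircle) = 0 := by
      rw [AddCircle.coe_eq_zero_iff]
      exact ⟨round x, by simp⟩
    rw [this, sub_zero]
  rw [hxy, fourier_coe_apply]
  have h1 : 2 * (Real.pi : ℂ) * Complex.I * ((n : ℤ) : ℂ) * (y : ℂ) / ((1 : ℝ) : ℂ)
      = ((2 * Real.pi * n * y : ℝ) : ℂ) * Complex.I := by
    push_cast; ring
  rw [h1, Complex.exp_ofReal_mul_I_re]
  have h2 := Real.one_sub_sq_div_two_le_cos (x := 2 * Real.pi * n * y)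
  have hN' : (0 : ℝ) < N := by exact_mod_cast hN
  have hn' : (n : ℝ) ≤ N := by exact_mod_cast hn
  have h3 : |2 * Real.pi * n * y| ≤ 1 := by
    rw [abs_mul, abs_of_nonneg (by positivity : (0 : ℝ) ≤ 2 * Real.pi * n)]
    calc 2 * Real.pi * n * |y| ≤ 2 * Real.pi * N * (1 / (8 * N)) := by gcongr
      _ = Real.pi / 4 := by field_simp; norm_num
      _ ≤ 1 := by linarith [Real.pi_le_four]
  have h4 : (2 * Real.pi * n * y) ^ 2 ≤ 1 := by
    rw [← sq_abs]; exact pow_le_one₀ (abs_nonneg _) h3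
  linarith

open MeasureTheory AddCircle in
lemma haar_ball (x : UnitAddCircle) (N : ℕ) (hN : 0 < N) :
    (haarAddCircle (T := 1)).real (Metric.closedBall x (1 / (8 * N))) = 1 / (4 * N) := by
  have h := AddCircle.volume_closedBall (T := 1) (x := x) (1 / (8 * N))
  rw [volume_eq_smul_haarAddCircle] at h
  simp only [ENNReal.ofReal_one, one_smul] at h
  have hN' : (1 : ℝ) ≤ N := by exact_mod_cast hN
  rw [Measure.real, h, ENNReal.toReal_ofReal (by positivity), min_eq_right]
  · field_simp; norm_num
  · rw [mul_one_div, div_le_one (by positivity)]; linarith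

open MeasureTheory AddCircle in
lemma int_ball (n : ℤ) (r : ℝ) (b : UnitAddCircle) :
    ∫ x in Metric.closedBall b r, fourier n x ∂(haarAddCircle (T := 1)) =
      fourier n b * ∫ x in Metric.closedBall 0 r, fourier n x ∂(haarAddCircle (T := 1)) := by
  rw [← integral_indicator Metric.isClosed_closedBall.measurableSet,
    ← integral_indicator Metric.isClosed_closedBall.measurableSet, ← integral_const_mul,
    ← integral_add_left_eq_self _ b]
  congr 1
  ext x
  by_cases hx : x ∈ Metric.closedBall (0 : UnitAddCircle) r
  · have : b + x ∈ Metric.closedBall b r := by simpa [dist_eq_norm] using hx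
    rw [Set.indicator_of_mem this, Set.indicator_of_mem hx]
    simp [fourier_apply, AddCircle.toCircle_add]
  · have : b + x ∉ Metric.closedBall b r := by simpa [dist_eq_norm] using hx
    rw [Set.indicator_of_notMem this, Set.indicator_of_notMem hx, mul_zero]

open MeasureTheory AddCircle in
lemma kappa_ge (N n : ℕ) (hN : 0 < N) (hn : n ≤ N) :
    1 / (8 * (N : ℝ)) ≤
      ‖∫ x in Metric.closedBall 0 (1 / (8 * N)), fourier (n : ℤ) x ∂(haarAddCircle (T := 1))‖ := by
  have hint : IntegrableOn (fun x => fourier (n : ℤ) x)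
      (Metric.closedBall (0 : UnitAddCircle) (1 / (8 * N))) (haarAddCircle (T := 1)) :=
    ((fourier (n : ℤ)).continuous.integrable_of_hasCompactSupport
      (HasCompactSupport.of_compactSpace _)).integrableOn
  refine le_trans ?_ (Complex.re_le_norm _)
  have h1 := integral_re (𝕜 := ℂ) hint
  have h1' : (∫ x in Metric.closedBall (0 : UnitAddCircle) (1 / (8 * N)),
      fourier (n : ℤ) x ∂(haarAddCircle (T := 1))).re =
      ∫ x in Metric.closedBall (0 : UnitAddCircle) (1 / (8 * N)),
      (fourier (n : ℤ) x).re ∂(haarAddCircle (T := 1)) := h1.symm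
  rw [h1']
  have h2 := setIntegral_mono_on (μ := haarAddCircle (T := 1))
    (f := fun _ => (1 / 2 : ℝ)) (g := fun x => (fourier (n : ℤ) x).re)
    (s := Metric.closedBall (0 : UnitAddCircle) (1 / (8 * N)))
    (by simp) hint.re Metric.isClosed_closedBall.measurableSet
    (fun x hx => re_fourier_ge N n hN hn x (by simpa using hx))
  refine le_trans (le_of_eq ?_) h2
  rw [setIntegral_const, haar_ball _ N hN, smul_eq_mul]
  field_simp; norm_num

open MeasureTheory AddCircle in
lemma large_sieve {ι : Type*} (N : ℕ) (hN : 0 < N) (T : Finset ι) (a : ι → ℂ) (β : ι → ℝ)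
    (ha : ∀ i ∈ T, ‖a i‖ ≤ 1) (A : Finset ℕ) (hA : A ⊆ Finset.Icc 1 N) :
    ∑ n ∈ A, ‖∑ i ∈ T, a i * e ((n : ℝ) * β i)‖ ^ 2 ≤
      16 * N * ∑ i ∈ T, ∑ j ∈ T,
        (open Classical in if torusNorm (β i - β j) ≤ 1 / (2 * N) then (1 : ℝ) else 0) := by
  classical
  have hN' : (0 : ℝ) < N := by exact_mod_cast hN
  set r : ℝ := 1 / (8 * N) with hr
  let B : ι → Set UnitAddCircle := fun i => Metric.closedBall ((β i : ℝ) : UnitAddCircle) r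
  have hB : ∀ i, MeasurableSet (B i) := fun i => Metric.isClosed_closedBall.measurableSet
  have hf : ∀ i, haarAddCircle (T := 1) (B i) ≠ ⊤ := fun i => measure_ne_top _ _
  let f : ι → Lp ℂ 2 (haarAddCircle (T := 1)) := fun i => indicatorConstLp 2 (hB i) (hf i) 1
  let G : Lp ℂ 2 (haarAddCircle (T := 1)) := ∑ i ∈ T, (starRingEnd ℂ (a i)) • f i
  have horth : Orthonormal ℂ (fun n : ℕ => fourierLp (T := 1) 2 (n : ℤ)) :=
    (orthonormal_fourier (T := 1)).comp (fun n : ℕ => (n : ℤ)) Nat.cast_injective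
  have hbes := horth.sum_inner_products_le (x := G) (s := A)
  -- norm of G
  have hG : ‖G‖ ^ 2 ≤ 1 / (4 * N) * ∑ i ∈ T, ∑ j ∈ T,
        (if torusNorm (β i - β j) ≤ 1 / (2 * N) then (1 : ℝ) else 0) := by
    have h1 : inner ℂ G G = ∑ i ∈ T, ∑ j ∈ T, a i * (starRingEnd ℂ (a j)) *
        (((haarAddCircle (T := 1)).real (B i ∩ B j) : ℝ) : ℂ) := by
      simp only [G]
      rw [sum_inner]
      refine Finset.sum_congr rfl fun i _ => ?_
      rw [inner_sum]
      refine Finset.sum_congr rfl fun j _ => ?_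
      rw [inner_smul_left, inner_smul_right]
      simp only [f]
      rw [L2.inner_indicatorConstLp_one_indicatorConstLp_one]
      simp [mul_assoc]
    have h2 : ‖G‖ ^ 2 = ‖inner ℂ G G‖ := by
      rw [inner_self_eq_norm_sq_to_K]; simp
    rw [h2, h1, Finset.mul_sum]
    refine (norm_sum_le _ _).trans (Finset.sum_le_sum fun i hi => ?_)
    rw [Finset.mul_sum]
    refine (norm_sum_le _ _).trans (Finset.sum_le_sum fun j hj => ?_)
    rw [norm_mul, norm_mul, RCLike.norm_conj, Complex.norm_real,
      Real.norm_of_nonneg measureReal_nonneg]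
    have h3 : ‖a i‖ * ‖a j‖ ≤ 1 := mul_le_one₀ (ha i hi) (norm_nonneg _) (ha j hj)
    have h4 : (haarAddCircle (T := 1)).real (B i ∩ B j) ≤
        1 / (4 * N) * (if torusNorm (β i - β j) ≤ 1 / (2 * N) then (1 : ℝ) else 0) := by
      split_ifs with h
      · rw [mul_one, ← haar_ball ((β i : ℝ) : UnitAddCircle) N hN]
        exact measureReal_mono Set.inter_subset_left
      · have : B i ∩ B j = ∅ := by
          by_contra hne
          obtain ⟨x, hx1, hx2⟩ := Set.nonempty_iff_ne_empty.mpr hne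
          apply h
          have h5 : dist ((β i : ℝ) : UnitAddCircle) ((β j : ℝ) : UnitAddCircle) ≤ r + r :=
            (dist_triangle_left _ _ x).trans (add_le_add hx1 hx2)
          rw [dist_eq_norm, ← AddCircle.coe_sub, UnitAddCircle.norm_eq] at h5
          refine le_trans h5 ?_
          rw [hr, ← two_mul, mul_one_div, div_le_div_iff₀ (by positivity) (by positivity)]
          linarith
        rw [this]; simp
    calc _ ≤ 1 * (haarAddCircle (T := 1)).real (B i ∩ B j) := by gcongr
      _ ≤ _ := by rw [one_mul]; exact h4
  have hterm : ∀ n ∈ A, (1 / (8 * N : ℝ)) ^ 2 * ‖∑ i ∈ T, a i * e ((n : ℝ) * β i)‖ ^ 2 ≤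
      ‖inner ℂ (fourierLp (T := 1) 2 (n : ℤ)) G‖ ^ 2 := by
    intro n hn
    have hnN : n ≤ N := (Finset.mem_Icc.mp (hA hn)).2
    have h1 : inner ℂ G (fourierLp (T := 1) 2 (n : ℤ)) =
        (∑ i ∈ T, a i * e ((n : ℝ) * β i)) *
          ∫ x in Metric.closedBall 0 r, fourier (n : ℤ) x ∂(haarAddCircle (T := 1)) := by
      simp only [G, sum_inner, inner_smul_left, Finset.sum_mul]
      refine Finset.sum_congr rfl fun i _ => ?_
      simp only [f]
      rw [L2.inner_indicatorConstLp_one,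
        setIntegral_congr_ae (g := fun x => fourier (n : ℤ) x) (hB i)
          ((coeFn_fourierLp (T := 1) 2 (n : ℤ)).mono fun x hx _ => hx), int_ball,
        fourier_coe_apply]
      simp only [RingHomCompTriple.comp_apply, RingHom.id_apply, e]
      rw [← mul_assoc]
      congr 3
      push_cast
      simp [mul_assoc]
    rw [norm_inner_symm, h1, norm_mul, ← mul_pow, mul_comm]
    have := kappa_ge N n hN hnN
    gcongr
  have hsum := (Finset.sum_le_sum hterm).trans (hbes.trans hG)
  rw [← Finset.mul_sum] at hsum
  have h64 : (64 * N ^ 2 : ℝ) * (1 / (8 * N : ℝ)) ^ 2 = 1 := by field_simp; norm_num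
  calc _ = (64 * N ^ 2 : ℝ) * ((1 / (8 * N : ℝ)) ^ 2 *
        ∑ n ∈ A, ‖∑ i ∈ T, a i * e ((n : ℝ) * β i)‖ ^ 2) := by
        rw [← mul_assoc, h64, one_mul]
    _ ≤ (64 * N ^ 2 : ℝ) * (1 / (4 * N) * ∑ i ∈ T, ∑ j ∈ T,
        (if torusNorm (β i - β j) ≤ 1 / (2 * N) then (1 : ℝ) else 0)) := by gcongr
    _ = _ := by rw [← mul_assoc]; congr 1; field_simp; norm_num

lemma energy_ge (m : ℕ) (S : Finset ℝ) (δ : ℝ) :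
    (∑ p ∈ Fintype.piFinset (fun _ : Fin m => S), ∑ q ∈ Fintype.piFinset (fun _ : Fin m => S),
      (open Classical in if torusNorm ((∑ i, p i) - ∑ i, q i) ≤ δ then (1 : ℝ) else 0)) ≤
      (energy m S δ : ℝ) := by
  classical
  rw [← Finset.sum_product', ← Finset.sum_filter, Finset.sum_const, nsmul_eq_mul, mul_one]
  have h2 : m + m = 2 * m := by omega
  let F : (Fin m → ℝ) × (Fin m → ℝ) → (Fin (2 * m) → ℝ) :=
    fun x i => Fin.append x.1 x.2 (Fin.cast h2.symm i)
  have hFsum : ∀ x, (∑ i : Fin (2 * m), if (i : ℕ) < m then F x i else -F x i) =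
      (∑ i, x.1 i) - ∑ i, x.2 i := by
    intro x
    rw [← Equiv.sum_comp (finCongr h2), Fin.sum_univ_add]
    simp [F, sub_eq_add_neg, -Fin.natAdd_eq_addNat]
  unfold energy
  norm_cast
  refine Finset.card_le_card_of_injOn F ?_ ?_
  · intro x hx
    simp only [Finset.coe_filter, Finset.mem_product, Fintype.mem_piFinset, Set.mem_ofPred_eq] at hx ⊢
    refine ⟨fun i => ?_, ?_⟩
    · simp only [F]
      generalize Fin.cast h2.symm i = j
      refine Fin.addCases (fun k => ?_) (fun k => ?_) j
      · simpa using hx.1.1 k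
      · simpa [-Fin.natAdd_eq_addNat] using hx.1.2 k
    · rw [hFsum]; exact hx.2
  · intro x _ y _ hxy
    ext k
    · have := congrFun hxy (Fin.cast h2 (Fin.castAdd m k))
      simpa [F, -Fin.natAdd_eq_addNat] using this
    · have := congrFun hxy (Fin.cast h2 (Fin.natAdd m k))
      simpa [F, -Fin.natAdd_eq_addNat] using this

lemma e_sum {ι : Type*} (s : Finset ι) (f : ι → ℝ) : e (∑ i ∈ s, f i) = ∏ i ∈ s, e (f i) := by
  simp only [e]
  rw [← Complex.exp_sum]
  congr 1
  push_cast
  rw [Finset.mul_sum]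

lemma pow_bound (N m : ℕ) (hN : 0 < N) (hm : 0 < m) (A : Finset ℕ)
    (hA : A ⊆ Finset.Icc 1 N) (S : Finset ℝ) :
    (∑ γ ∈ S, ‖∑ n ∈ A, e ((n : ℝ) * γ)‖) ^ (2 * m) ≤
      (A.card : ℝ) ^ (2 * m - 1) * (16 * N * energy m S (1 / (2 * N))) := by
  classical
  have hc : ∀ z : ℂ, ∃ c : ℂ, ‖c‖ ≤ 1 ∧ c * z = ‖z‖ := by
    intro z
    by_cases hz : z = 0
    · exact ⟨0, by simp, by simp [hz]⟩
    · refine ⟨‖z‖ / z, ?_, ?_⟩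
      · simp [hz]
      · field_simp
  choose c hc1 hc2 using hc
  let d : ℝ → ℂ := fun γ => c (∑ n ∈ A, e ((n : ℝ) * γ))
  let F : ℕ → ℂ := fun n => ∑ γ ∈ S, d γ * e ((n : ℝ) * γ)
  have hX : (((∑ γ ∈ S, ‖∑ n ∈ A, e ((n : ℝ) * γ)‖ : ℝ)) : ℂ) = ∑ n ∈ A, F n := by
    simp only [F]
    rw [Finset.sum_comm]
    push_cast
    refine Finset.sum_congr rfl fun γ _ => ?_
    rw [← Finset.mul_sum]
    exact (hc2 _).symm
  have hX0 : 0 ≤ ∑ γ ∈ S, ‖∑ n ∈ A, e ((n : ℝ) * γ)‖ := by positivity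
  have hX1 : ∑ γ ∈ S, ‖∑ n ∈ A, e ((n : ℝ) * γ)‖ ≤ ∑ n ∈ A, ‖F n‖ := by
    rw [← Real.norm_of_nonneg hX0, ← Complex.norm_real, hX]
    exact norm_sum_le _ _
  have hF : ∀ n : ℕ, F n ^ m = ∑ p ∈ Fintype.piFinset (fun _ : Fin m => S),
      (∏ i, d (p i)) * e ((n : ℝ) * ∑ i, p i) := by
    intro n
    have := Finset.prod_univ_sum (fun _ : Fin m => S) (fun _ γ => d γ * e ((n : ℝ) * γ))
    simp only [Finset.prod_const, Finset.card_univ, Fintype.card_fin] at this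
    simp only [F]
    rw [this]
    refine Finset.sum_congr rfl fun p _ => ?_
    rw [Finset.prod_mul_distrib, Finset.mul_sum, e_sum]
  have hls := large_sieve N hN (Fintype.piFinset (fun _ : Fin m => S))
    (fun p => ∏ i, d (p i)) (fun p => ∑ i, p i)
    (fun p _ => by
      rw [norm_prod]
      exact Finset.prod_le_one (fun _ _ => norm_nonneg _) (fun _ _ => hc1 _)) A hA
  have hen := energy_ge m S (1 / (2 * N))
  have hpow := pow_sum_le_card_mul_sum_pow (s := A) (f := fun n => ‖F n‖)
    (fun _ _ => norm_nonneg _) (2 * m - 1)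
  have hm1 : 2 * m - 1 + 1 = 2 * m := by omega
  rw [hm1] at hpow
  refine (pow_le_pow_left₀ hX0 hX1 _).trans (hpow.trans ?_)
  gcongr
  calc ∑ n ∈ A, ‖F n‖ ^ (2 * m) = _ := by
        refine Finset.sum_congr rfl fun n _ => ?_
        rw [mul_comm, pow_mul, ← norm_pow, hF]
    _ ≤ _ := hls
    _ ≤ _ := by gcongr

/-- Lemma 6.1 (Bloom–Maynard, Lemma 7): for any finite set `S` of frequencies on the torus,
`∑_{γ ∈ S} |1̂_A(γ)| ≪ |A|·σ^{-1/2m}·E_{2m}(S;1/2N)^{1/2m}`. -/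
theorem stmt17 :
    ∃ C : ℝ, 0 < C ∧
      ∀ N m : ℕ, 0 < N → 0 < m → ∀ A : Finset ℕ, A.Nonempty → A ⊆ Finset.Icc 1 N →
        ∀ S : Finset ℝ,
          (∑ γ ∈ S, ‖∑ n ∈ A, e ((n : ℝ) * γ)‖) ≤
            C * A.card * ((A.card : ℝ) / N) ^ (-(1 : ℝ) / (2 * m)) *
              (energy m S (1 / (2 * N)) : ℝ) ^ ((1 : ℝ) / (2 * m)) := by
  refine ⟨16, by norm_num, ?_⟩
  intro N m hN hm A hAne hA S
  have hN' : (0 : ℝ) < N := by exact_mod_cast hN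
  have hm' : (0 : ℝ) < m := by exact_mod_cast hm
  have hA' : (0 : ℝ) < A.card := by exact_mod_cast hAne.card_pos
  have hm2 : 2 * m ≠ 0 := by omega
  refine le_of_pow_le_pow_left₀ hm2 (by positivity) ((pow_bound N m hN hm A hA S).trans ?_)
  set E : ℝ := (energy m S (1 / (2 * N)) : ℝ) with hE
  have hE0 : 0 ≤ E := by positivity
  have h1 : ((A.card : ℝ) / N) ^ (-(1 : ℝ) / (2 * m)) =
      (((A.card : ℝ) / N)⁻¹) ^ (((2 * m : ℕ) : ℝ)⁻¹) := by
    rw [Real.inv_rpow (by positivity), ← Real.rpow_neg (by positivity)]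
    congr 1
    push_cast
    rw [neg_div, one_div]
  have h2 : E ^ ((1 : ℝ) / (2 * m)) = E ^ (((2 * m : ℕ) : ℝ)⁻¹) := by
    congr 1
    push_cast
    rw [one_div]
  rw [h1, h2, mul_pow, mul_pow, Real.rpow_inv_natCast_pow (by positivity) hm2,
    Real.rpow_inv_natCast_pow hE0 hm2, mul_pow]
  obtain ⟨k, hk⟩ : ∃ k, 2 * m = k + 1 := ⟨2 * m - 1, by omega⟩
  rw [hk, Nat.add_sub_cancel, inv_div]
  have h16 : (16 : ℝ) ≤ 16 ^ (k + 1) := le_self_pow₀ (by norm_num) (by omega)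
  calc (A.card : ℝ) ^ k * (16 * N * E) = 16 * (A.card : ℝ) ^ (k + 1) * (N / A.card) * E := by
        rw [pow_succ]; field_simp
    _ ≤ _ := by gcongr
end

section
/- There is an absolute constant C > 0 such that the following holds. Let Q ≥ 4, let m ≥ 2 be an integer, and let n be a positive integer. Let S ⊆ 𝕋 be a finite set of rational points, each representable as a/q with integers 1 ≤ a ≤ q ≤ Q, such that S is contained in an interval of length 1/(8m) in 𝕋 and, for every q ≤ Q, at most n elements of S have denominator q. Then E_{2m}(S;0) ≤ (log Q)^{C^m}·(Q·n)^m. -/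
/-- The denominator of a rational point of `𝕋`: the least `q ≥ 1` with `x·q ∈ ℤ`. -/
noncomputable def den (x : ℝ) : ℕ := sInf {q : ℕ | 0 < q ∧ ∃ a : ℤ, x * q = (a : ℝ)}


lemma aux_log {ι : Type*} (X : Finset ι) (y : ι → ℝ) (c : ℝ) (hc : 0 < c)
    (hy : ∀ x ∈ X, 0 < y x) (h : ∑ x ∈ X, y x ≤ X.card * c) :
    ∑ x ∈ X, Real.log (y x) ≤ X.card * Real.log c := by
  have h1 : ∀ x ∈ X, Real.log (y x) ≤ y x / c - 1 + Real.log c := by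
    intro x hx
    have := Real.log_le_sub_one_of_pos (div_pos (hy x hx) hc)
    rw [Real.log_div (hy x hx).ne' hc.ne'] at this
    linarith
  refine (Finset.sum_le_sum h1).trans ?_
  rw [Finset.sum_add_distrib, Finset.sum_sub_distrib, ← Finset.sum_div]
  simp only [Finset.sum_const, nsmul_eq_mul, mul_one]
  have : (∑ x ∈ X, y x) / c ≤ X.card := by rwa [div_le_iff₀ hc]
  linarith

open Classical in
lemma aux_chain {α : Type*} : ∀ (k : ℕ) (X : Finset (Fin k → α)) (u : Fin k → α → ℝ),
    (∀ i a, 0 ≤ u i a) →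
    (∀ x ∈ X, ∀ i, ∑ b ∈ (X.filter (fun y => ∀ j < i, y j = x j)).image (fun y => y i), u i b ≤ 1) →
    ∑ x ∈ X, ∏ i, u i (x i) ≤ 1 := by
  intro k
  induction k with
  | zero =>
    intro X u _ _
    have : X.card ≤ 1 := Finset.card_le_one.2 (fun a _ b _ => Subsingleton.elim a b)
    simpa using this
  | succ k ih =>
    intro X u hu h
    rcases X.eq_empty_or_nonempty with rfl | ⟨x0, hx0⟩
    · simp
    have h0 := h x0 hx0 0
    simp only [Fin.not_lt_zero, false_imp_iff, implies_true, Finset.filter_true] at h0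
    refine le_trans ?_ h0
    rw [← Finset.sum_fiberwise_of_maps_to (s := X) (t := X.image (fun y => y 0)) (g := fun y => y 0)
      (fun x hx => Finset.mem_image_of_mem _ hx)]
    refine Finset.sum_le_sum fun b hb => ?_
    have e1 : ∑ x ∈ X with x 0 = b, ∏ i, u i (x i)
        = u 0 b * ∑ x ∈ X with x 0 = b, ∏ i : Fin k, u i.succ (Fin.tail x i) := by
      rw [Finset.mul_sum]
      refine Finset.sum_congr rfl fun x hx => ?_
      rw [Fin.prod_univ_succ, (Finset.mem_filter.1 hx).2]
      rfl
    have e2 : ∑ x ∈ X with x 0 = b, ∏ i : Fin k, u i.succ (Fin.tail x i)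
        = ∑ x ∈ (X.filter (fun x => x 0 = b)).image Fin.tail, ∏ i : Fin k, u i.succ (x i) := by
      rw [Finset.sum_image]
      intro x hx y hy hxy
      have hx := (Finset.mem_filter.1 hx).2
      have hy := (Finset.mem_filter.1 hy).2
      rw [← Fin.cons_self_tail x, ← Fin.cons_self_tail y, hxy, hx, hy]
    rw [e1, e2]
    refine mul_le_of_le_one_right (hu _ _) (ih _ _ (fun i a => hu _ _) ?_)
    intro x hx i
    obtain ⟨z, hz, rfl⟩ := Finset.mem_image.1 hx
    obtain ⟨hz, hz0⟩ := Finset.mem_filter.1 hz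
    refine le_trans (Finset.sum_le_sum_of_subset_of_nonneg ?_ fun _ _ _ => hu _ _) (h z hz i.succ)
    intro c hc
    simp only [Finset.mem_image, Finset.mem_filter] at hc ⊢
    obtain ⟨_, ⟨⟨y, ⟨hy, hy0⟩, rfl⟩, hyj⟩, rfl⟩ := hc
    refine ⟨y, ⟨hy, ?_⟩, rfl⟩
    intro j hj
    refine Fin.cases (fun _ => by rw [hy0, hz0]) (fun j hj => hyj j (by simpa using hj)) j hj

open Classical in
lemma aux_chain_rev {α : Type*} (k : ℕ) (X : Finset (Fin k → α)) (u : Fin k → α → ℝ)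
    (hu : ∀ i a, 0 ≤ u i a)
    (h : ∀ x ∈ X, ∀ i, ∑ b ∈ (X.filter (fun y => ∀ j, i < j → y j = x j)).image (fun y => y i), u i b ≤ 1) :
    ∑ x ∈ X, ∏ i, u i (x i) ≤ 1 := by
  have := aux_chain k (X.image (fun x i => x (Fin.rev i))) (fun i => u (Fin.rev i))
    (fun i a => hu _ _) ?_
  · rw [Finset.sum_image] at this
    · refine le_trans (le_of_eq ?_) this
      refine Finset.sum_congr rfl fun x _ => ?_
      exact (Fintype.prod_equiv Fin.revPerm _ _ (fun i => by simp))
    · intro x _ y _ hxy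
      funext i
      simpa using congrFun hxy (Fin.rev i)
  · intro x hx i
    obtain ⟨z, hz, rfl⟩ := Finset.mem_image.1 hx
    refine le_trans (Finset.sum_le_sum_of_subset_of_nonneg ?_ fun _ _ _ => hu _ _) (h z hz (Fin.rev i))
    intro c hc
    simp only [Finset.mem_image, Finset.mem_filter] at hc ⊢
    obtain ⟨_, ⟨⟨y, hy, rfl⟩, hyj⟩, rfl⟩ := hc
    refine ⟨y, ⟨hy, ?_⟩, rfl⟩
    intro j hj
    have := hyj (Fin.rev j) (by rw [Fin.rev_lt_iff]; exact hj)
    simpa using this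

open Classical in
/-- entropy-type inequality -/
lemma aux_entropy {α β : Type*} (k : ℕ) (X : Finset (Fin k → α)) (hX : X.Nonempty)
    (L F : Fin k → α → β) (n : ℕ) (c : Fin k → ℕ)
    (hL : ∀ x ∈ X, ∀ y ∈ X, ∀ i, (∀ j < i, y j = x j) → L i (y i) = L i (x i))
    (hF : ∀ x ∈ X, ∀ y ∈ X, ∀ i, (∀ j, i < j → y j = x j) → F i (y i) = F i (x i))
    (hn : ∀ i, (X.image (fun x => x i)).card ≤ n)
    (hc : ∀ i l f, ((X.image (fun x => x i)).filter (fun b => L i b = l ∧ F i b = f)).card ≤ c i) :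
    (X.card : ℝ) ^ 2 ≤ ∏ i, ((n : ℝ) * c i) := by
  set N : ℝ := (X.card : ℝ) with hN
  have hNpos : 0 < N := by rw [hN]; exact_mod_cast hX.card_pos
  -- counts
  let P : Fin k → Finset α := fun i => X.image (fun x => x i)
  let ν : Fin k → α → ℝ := fun i b => ((X.filter (fun x => x i = b)).card : ℝ)
  let lam : Fin k → β → ℝ := fun i l => ∑ b ∈ (P i).filter (fun b => L i b = l), ν i b
  let phi : Fin k → β → ℝ := fun i l => ∑ b ∈ (P i).filter (fun b => F i b = l), ν i b
  have hν0 : ∀ i b, 0 ≤ ν i b := fun i b => Nat.cast_nonneg _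
  have hνpos : ∀ i, ∀ x ∈ X, 0 < ν i (x i) := by
    intro i x hx
    have : 0 < (X.filter (fun y => y i = x i)).card :=
      Finset.card_pos.2 ⟨x, Finset.mem_filter.2 ⟨hx, rfl⟩⟩
    exact Nat.cast_pos.2 this
  have hPmem : ∀ i, ∀ x ∈ X, x i ∈ P i := fun i x hx => Finset.mem_image_of_mem _ hx
  have hsumν : ∀ i, ∑ b ∈ P i, ν i b = N := by
    intro i
    have := Finset.card_eq_sum_card_fiberwise (s := X) (t := P i) (f := fun x => x i)
      (fun x hx => hPmem i x hx)
    rw [hN, this]; push_cast; rfl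
  have hlam0 : ∀ i l, 0 ≤ lam i l := fun i l => Finset.sum_nonneg fun _ _ => hν0 _ _
  have hphi0 : ∀ i l, 0 ≤ phi i l := fun i l => Finset.sum_nonneg fun _ _ => hν0 _ _
  have hlampos : ∀ i, ∀ x ∈ X, 0 < lam i (L i (x i)) := by
    intro i x hx
    refine lt_of_lt_of_le (hνpos i x hx) ?_
    exact Finset.single_le_sum (f := ν i) (fun _ _ => hν0 _ _)
      (Finset.mem_filter.2 ⟨hPmem i x hx, rfl⟩)
  have hphipos : ∀ i, ∀ x ∈ X, 0 < phi i (F i (x i)) := by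
    intro i x hx
    refine lt_of_lt_of_le (hνpos i x hx) ?_
    exact Finset.single_le_sum (f := ν i) (fun _ _ => hν0 _ _)
      (Finset.mem_filter.2 ⟨hPmem i x hx, rfl⟩)
  -- weights
  have hw : ∑ x ∈ X, ∏ i, (ν i (x i) / lam i (L i (x i))) ≤ 1 := by
    refine aux_chain k X (fun i b => ν i b / lam i (L i b))
      (fun i b => div_nonneg (hν0 _ _) (hlam0 _ _)) ?_
    intro x hx i
    have hsub : (X.filter (fun y => ∀ j < i, y j = x j)).image (fun y => y i)
        ⊆ (P i).filter (fun b => L i b = L i (x i)) := by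
      intro b hb
      obtain ⟨y, hy, rfl⟩ := Finset.mem_image.1 hb
      obtain ⟨hy, hy'⟩ := Finset.mem_filter.1 hy
      exact Finset.mem_filter.2 ⟨hPmem i y hy, hL x hx y hy i hy'⟩
    refine (Finset.sum_le_sum_of_subset_of_nonneg hsub
      (fun _ _ _ => div_nonneg (hν0 _ _) (hlam0 _ _))).trans ?_
    have : ∑ b ∈ (P i).filter (fun b => L i b = L i (x i)), ν i b / lam i (L i b)
        = ∑ b ∈ (P i).filter (fun b => L i b = L i (x i)), ν i b / lam i (L i (x i)) :=
      Finset.sum_congr rfl fun b hb => by rw [(Finset.mem_filter.1 hb).2]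
    rw [this, ← Finset.sum_div]
    exact div_self_le_one _
  have hw' : ∑ x ∈ X, ∏ i, (ν i (x i) / phi i (F i (x i))) ≤ 1 := by
    refine aux_chain_rev k X (fun i b => ν i b / phi i (F i b))
      (fun i b => div_nonneg (hν0 _ _) (hphi0 _ _)) ?_
    intro x hx i
    have hsub : (X.filter (fun y => ∀ j, i < j → y j = x j)).image (fun y => y i)
        ⊆ (P i).filter (fun b => F i b = F i (x i)) := by
      intro b hb
      obtain ⟨y, hy, rfl⟩ := Finset.mem_image.1 hb
      obtain ⟨hy, hy'⟩ := Finset.mem_filter.1 hy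
      exact Finset.mem_filter.2 ⟨hPmem i y hy, hF x hx y hy i hy'⟩
    refine (Finset.sum_le_sum_of_subset_of_nonneg hsub
      (fun _ _ _ => div_nonneg (hν0 _ _) (hphi0 _ _))).trans ?_
    have : ∑ b ∈ (P i).filter (fun b => F i b = F i (x i)), ν i b / phi i (F i b)
        = ∑ b ∈ (P i).filter (fun b => F i b = F i (x i)), ν i b / phi i (F i (x i)) :=
      Finset.sum_congr rfl fun b hb => by rw [(Finset.mem_filter.1 hb).2]
    rw [this, ← Finset.sum_div]
    exact div_self_le_one _
  have hNN : N * N⁻¹ = 1 := mul_inv_cancel₀ hNpos.ne'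
  have l1 := aux_log X (fun x => ∏ i, (ν i (x i) / lam i (L i (x i)))) N⁻¹ (inv_pos.2 hNpos)
    (fun x hx => Finset.prod_pos fun i _ => div_pos (hνpos i x hx) (hlampos i x hx))
    (by rw [← hN, hNN]; exact hw)
  have l2 := aux_log X (fun x => ∏ i, (ν i (x i) / phi i (F i (x i)))) N⁻¹ (inv_pos.2 hNpos)
    (fun x hx => Finset.prod_pos fun i _ => div_pos (hνpos i x hx) (hphipos i x hx))
    (by rw [← hN, hNN]; exact hw')
  -- sums over X of functions of coordinate
  have hfib : ∀ i (f : α → ℝ), ∑ x ∈ X, f (x i) = ∑ b ∈ P i, ν i b * f b := by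
    intro i f
    rw [← Finset.sum_fiberwise_of_maps_to (s := X) (t := P i) (g := fun y => y i)
      (fun x hx => hPmem i x hx)]
    refine Finset.sum_congr rfl fun b _ => ?_
    rw [Finset.sum_congr rfl (g := fun _ => f b) (fun x hx => by rw [(Finset.mem_filter.1 hx).2])]
    simp [ν]
  have hνP : ∀ i, ∀ b ∈ P i, 0 < ν i b := by
    intro i b hb
    obtain ⟨x, hx, rfl⟩ := Finset.mem_image.1 hb
    exact hνpos i x hx
  obtain ⟨x0, hx0⟩ := hX
  have hnpos : ∀ _ : Fin k, 0 < (n : ℝ) := by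
    intro i
    have : 0 < (P i).card := Finset.card_pos.2 ⟨_, hPmem i x0 hx0⟩
    exact_mod_cast this.trans_le (hn i)
  have hcpos : ∀ i : Fin k, 0 < (c i : ℝ) := by
    intro i
    have : 0 < ((P i).filter (fun b => L i b = L i (x0 i) ∧ F i b = F i (x0 i))).card :=
      Finset.card_pos.2 ⟨_, Finset.mem_filter.2 ⟨hPmem i x0 hx0, rfl, rfl⟩⟩
    exact_mod_cast this.trans_le (hc i _ _)
  have l3 : ∀ i, ∑ x ∈ X, Real.log (N / ν i (x i)) ≤ N * Real.log n := by
    intro i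
    refine aux_log X (fun x => N / ν i (x i)) n (hnpos i) (fun x hx => div_pos hNpos (hνpos i x hx)) ?_
    rw [hfib i (fun b => N / ν i b)]
    rw [Finset.sum_congr rfl (g := fun _ => N)
      (fun b hb => by rw [mul_div_cancel₀ _ (hνP i b hb).ne'])]
    simp only [Finset.sum_const, nsmul_eq_mul]
    rw [mul_comm, ← hN]
    exact mul_le_mul_of_nonneg_left (by exact_mod_cast hn i) hNpos.le
  have hlamsum : ∀ i, ∑ l ∈ (P i).image (L i), lam i l = N := by
    intro i
    rw [← hsumν i]
    exact Finset.sum_fiberwise_of_maps_to (fun b hb => Finset.mem_image_of_mem _ hb) _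
  have hphisum : ∀ i, ∑ l ∈ (P i).image (F i), phi i l = N := by
    intro i
    rw [← hsumν i]
    exact Finset.sum_fiberwise_of_maps_to (fun b hb => Finset.mem_image_of_mem _ hb) _
  have l4 : ∀ i, ∑ x ∈ X, Real.log (lam i (L i (x i)) * phi i (F i (x i)) / (N * ν i (x i)))
      ≤ N * Real.log (c i) := by
    intro i
    refine aux_log X (fun x => lam i (L i (x i)) * phi i (F i (x i)) / (N * ν i (x i))) (c i)
      (hcpos i) (fun x hx => div_pos (mul_pos (hlampos i x hx) (hphipos i x hx))
        (mul_pos hNpos (hνpos i x hx))) ?_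
    rw [hfib i (fun b => lam i (L i b) * phi i (F i b) / (N * ν i b))]
    rw [Finset.sum_congr rfl (g := fun b => (lam i (L i b) * phi i (F i b)) / N)
      (fun b hb => by have := (hνP i b hb).ne'; field_simp)]
    rw [← Finset.sum_div, div_le_iff₀ hNpos, ← hN]
    rw [← Finset.sum_fiberwise_of_maps_to (s := P i) (t := (P i).image (L i) ×ˢ (P i).image (F i))
      (g := fun b => (L i b, F i b)) (fun b hb => Finset.mem_product.2
        ⟨Finset.mem_image_of_mem _ hb, Finset.mem_image_of_mem _ hb⟩)]
    calc _ ≤ ∑ p ∈ (P i).image (L i) ×ˢ (P i).image (F i), (c i : ℝ) * (lam i p.1 * phi i p.2) := by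
          refine Finset.sum_le_sum fun p _ => ?_
          rw [Finset.sum_congr rfl (g := fun _ => lam i p.1 * phi i p.2)
            (fun b hb => by rw [← (Finset.mem_filter.1 hb).2])]
          simp only [Finset.sum_const, nsmul_eq_mul]
          refine mul_le_mul_of_nonneg_right ?_ (mul_nonneg (hlam0 _ _) (hphi0 _ _))
          have := hc i p.1 p.2
          have e : (P i).filter (fun b => (L i b, F i b) = p)
              = (P i).filter (fun b => L i b = p.1 ∧ F i b = p.2) :=
            Finset.filter_congr fun b _ => by rw [Prod.ext_iff]
          rw [e]; exact_mod_cast this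
      _ = c i * (N * N) := by
          rw [← Finset.mul_sum, Finset.sum_product, ← Finset.sum_mul_sum, hlamsum, hphisum]
      _ = _ := by ring
  have key : 2 * (N * Real.log N) ≤ ∑ i, (N * Real.log n + N * Real.log (c i)) := by
    have a1 : ∑ x ∈ X, Real.log (∏ i, (ν i (x i) / lam i (L i (x i))))
        + ∑ x ∈ X, Real.log (∏ i, (ν i (x i) / phi i (F i (x i))))
        = - ∑ i, (∑ x ∈ X, Real.log (N / ν i (x i)) +
          ∑ x ∈ X, Real.log (lam i (L i (x i)) * phi i (F i (x i)) / (N * ν i (x i)))) := by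
      simp_rw [← Finset.sum_add_distrib]
      rw [Finset.sum_comm, ← Finset.sum_neg_distrib]
      refine Finset.sum_congr rfl fun x hx => ?_
      have p1 := fun i => (hνpos i x hx).ne'
      have p2 := fun i => (hlampos i x hx).ne'
      have p3 := fun i => (hphipos i x hx).ne'
      rw [Real.log_prod (fun i _ => div_ne_zero (p1 i) (p2 i)),
        Real.log_prod (fun i _ => div_ne_zero (p1 i) (p3 i)), ← Finset.sum_add_distrib,
        ← Finset.sum_neg_distrib]
      refine Finset.sum_congr rfl fun i _ => ?_
      rw [Real.log_div (p1 i) (p2 i), Real.log_div (p1 i) (p3 i), Real.log_div hNpos.ne' (p1 i),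
        Real.log_div (mul_ne_zero (p2 i) (p3 i)) (mul_ne_zero hNpos.ne' (p1 i)),
        Real.log_mul (p2 i) (p3 i), Real.log_mul hNpos.ne' (p1 i)]
      ring
    have a2 := Finset.sum_le_sum (s := Finset.univ) (fun i _ => add_le_add (l3 i) (l4 i))
    rw [Real.log_inv, ← hN] at l1 l2
    linarith
  have e : ∑ i, (N * Real.log n + N * Real.log (c i)) = N * Real.log (∏ i, ((n : ℝ) * c i)) := by
    rw [Real.log_prod (fun i _ => (mul_pos (hnpos i) (hcpos i)).ne'), Finset.mul_sum]
    refine Finset.sum_congr rfl fun i _ => ?_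
    rw [Real.log_mul (hnpos i).ne' (hcpos i).ne']; ring
  rw [e] at key
  have : Real.log (N ^ 2) ≤ Real.log (∏ i, ((n : ℝ) * c i)) := by
    rw [Real.log_pow]; push_cast
    have : N * (2 * Real.log N) ≤ N * Real.log (∏ i, ((n : ℝ) * c i)) := by linarith
    exact le_of_mul_le_mul_left this hNpos
  exact (Real.log_le_log_iff (pow_pos hNpos 2)
    (Finset.prod_pos fun i _ => mul_pos (hnpos i) (hcpos i))).1 this

lemma aux_gcd_min {ι : Type*} [LinearOrder ι] (q : ι → ℕ) (s : Finset ι) :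
    (∏ i ∈ s, Nat.gcd (q i) ((s.filter (fun j => i < j)).lcm q)) * s.lcm q = ∏ i ∈ s, q i := by
  induction s using Finset.induction_on_min with
  | empty => simp
  | insert a s ha ih =>
    have hns : a ∉ s := fun h => lt_irrefl _ (ha a h)
    rw [Finset.prod_insert hns, Finset.prod_insert hns, Finset.lcm_insert]
    have e1 : (insert a s).filter (fun j => a < j) = s := by
      rw [Finset.filter_insert, if_neg (lt_irrefl _)]
      exact Finset.filter_true_of_mem ha
    have e2 : ∀ i ∈ s, (insert a s).filter (fun j => i < j) = s.filter (fun j => i < j) := by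
      intro i hi
      rw [Finset.filter_insert, if_neg (not_lt.2 (ha i hi).le)]
    rw [e1, Finset.prod_congr rfl (fun i hi => by rw [e2 i hi]), ← ih]
    have := Nat.gcd_mul_lcm (q a) (s.lcm q)
    change _ * Nat.lcm (q a) (s.lcm q) = _
    calc _ = (Nat.gcd (q a) (s.lcm q) * Nat.lcm (q a) (s.lcm q)) * ∏ i ∈ s, Nat.gcd (q i) ((s.filter (fun j => i < j)).lcm q) := by ring
      _ = _ := by rw [this]; ring

lemma aux_gcd_max {ι : Type*} [LinearOrder ι] (q : ι → ℕ) (s : Finset ι) :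
    (∏ i ∈ s, Nat.gcd (q i) ((s.filter (fun j => j < i)).lcm q)) * s.lcm q = ∏ i ∈ s, q i :=
  aux_gcd_min (ι := ιᵒᵈ) q s

lemma aux_gcd {k : ℕ} (q : Fin k → ℕ) (hq : ∀ i, 0 < q i)
    (h : ∀ i, q i ∣ Nat.lcm ((Finset.univ.filter (fun j => i < j)).lcm q)
      ((Finset.univ.filter (fun j => j < i)).lcm q)) :
    (∏ i, Nat.gcd (Nat.gcd (q i) ((Finset.univ.filter (fun j => i < j)).lcm q))
      (Nat.gcd (q i) ((Finset.univ.filter (fun j => j < i)).lcm q))) * (Finset.univ.lcm q) ^ 2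
      = ∏ i, q i := by
  have h1 := aux_gcd_min q Finset.univ
  have h2 := aux_gcd_max q Finset.univ
  have e : ∀ i, Nat.gcd (Nat.gcd (q i) ((Finset.univ.filter (fun j => i < j)).lcm q))
      (Nat.gcd (q i) ((Finset.univ.filter (fun j => j < i)).lcm q)) * q i =
      Nat.gcd (q i) ((Finset.univ.filter (fun j => i < j)).lcm q) *
      Nat.gcd (q i) ((Finset.univ.filter (fun j => j < i)).lcm q) := by
    intro i
    have hi := h i
    have hA0 : (Finset.univ.filter (fun j => i < j)).lcm q ≠ 0 := by
      rw [Ne, Finset.lcm_eq_zero_iff]; rintro ⟨j, _, hj⟩; exact (hq j).ne' hj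
    have hB0 : (Finset.univ.filter (fun j => j < i)).lcm q ≠ 0 := by
      rw [Ne, Finset.lcm_eq_zero_iff]; rintro ⟨j, _, hj⟩; exact (hq j).ne' hj
    generalize (Finset.univ.filter (fun j => i < j)).lcm q = A at *
    generalize (Finset.univ.filter (fun j => j < i)).lcm q = B at *
    rw [← Nat.gcd_mul_lcm (Nat.gcd (q i) A)]
    congr 1
    have := Nat.gcd_eq_left hi
    have hq0 := (hq i).ne'
    have hA : A ≠ 0 := hA0
    have hB : B ≠ 0 := hB0
    have h3 : Nat.lcm (Nat.gcd (q i) A) (Nat.gcd (q i) B) = Nat.gcd (q i) (Nat.lcm A B) := by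
      have g1 := Nat.gcd_ne_zero_left (n := A) hq0
      have g2 := Nat.gcd_ne_zero_left (n := B) hq0
      refine Nat.eq_of_factorization_eq (Nat.lcm_ne_zero g1 g2) (Nat.gcd_ne_zero_left hq0) ?_
      intro p
      rw [Nat.factorization_lcm g1 g2, Nat.factorization_gcd hq0 hA, Nat.factorization_gcd hq0 hB,
        Nat.factorization_gcd hq0 (Nat.lcm_ne_zero hA hB), Nat.factorization_lcm hA hB]
      simp only [Finsupp.sup_apply, Finsupp.inf_apply]
      exact (inf_sup_left _ _ _).symm
    rw [h3, this]
  have hp : 0 < ∏ i, q i := Finset.prod_pos fun i _ => hq i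
  have e' := Finset.prod_congr (rfl : (Finset.univ : Finset (Fin k)) = _) (fun i _ => e i)
  rw [Finset.prod_mul_distrib, Finset.prod_mul_distrib] at e'
  refine Nat.eq_of_mul_eq_mul_right hp ?_
  calc _ = _ * (∏ i, q i) * (Finset.univ.lcm q)^2 := by ring
    _ = _ := by rw [e']
    _ = _ * (∏ i, q i) := by nth_rewrite 1 [← h1]; rw [← h2]; ring

lemma den_spec {x : ℝ} {q : ℕ} (hq : 0 < q) (h : ∃ a : ℤ, x * q = a) :
    0 < den x ∧ (∃ a : ℤ, x * den x = a) ∧ den x ≤ q := by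
  have hm : q ∈ {q : ℕ | 0 < q ∧ ∃ a : ℤ, x * q = (a : ℝ)} := ⟨hq, h⟩
  have := Nat.sInf_mem ⟨q, hm⟩
  exact ⟨this.1, this.2, Nat.sInf_le hm⟩

lemma den_dvd {x : ℝ} {M : ℕ} (hp : 0 < den x) (h0 : ∃ a : ℤ, x * den x = a)
    (h : ∃ a : ℤ, x * M = a) : den x ∣ M := by
  rw [Nat.dvd_iff_mod_eq_zero]
  by_contra hne
  obtain ⟨a, ha⟩ := h0
  obtain ⟨b, hb⟩ := h
  have : ∃ c : ℤ, x * (M % den x : ℕ) = c := by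
    refine ⟨b - a * ((M / den x : ℕ) : ℤ), ?_⟩
    have e : (M : ℝ) = den x * (M / den x : ℕ) + (M % den x : ℕ) := by
      exact_mod_cast (Nat.div_add_mod M (den x)).symm
    rw [Int.cast_sub, Int.cast_mul, ← hb, ← ha, e, Int.cast_natCast]; ring
  have := (den_spec (Nat.pos_of_ne_zero hne) this).2.2
  exact absurd (Nat.mod_lt M hp) (not_lt.2 this)

/-- combining integrality with gcd -/
lemma int_gcd {x : ℝ} {A B : ℕ} (hA : ∃ a : ℤ, x * A = a) (hB : ∃ a : ℤ, x * B = a) :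
    ∃ a : ℤ, x * (Nat.gcd A B : ℕ) = a := by
  obtain ⟨a, ha⟩ := hA
  obtain ⟨b, hb⟩ := hB
  refine ⟨a * Nat.gcdA A B + b * Nat.gcdB A B, ?_⟩
  have : ((Nat.gcd A B : ℕ) : ℝ) = A * Nat.gcdA A B + B * Nat.gcdB A B := by
    exact_mod_cast Nat.gcd_eq_gcd_ab A B
  rw [this]; push_cast; rw [← ha, ← hb]; ring

lemma int_dvd {x : ℝ} {A B : ℕ} (h : A ∣ B) (hA : ∃ a : ℤ, x * A = a) : ∃ a : ℤ, x * B = a := by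
  obtain ⟨c, rfl⟩ := h
  obtain ⟨a, ha⟩ := hA
  exact ⟨a * c, by push_cast; rw [← ha]; ring⟩

lemma card_le_d (T : Finset ℝ) (d : ℕ) (h01 : ∀ x ∈ T, 0 < x ∧ x ≤ 1) (hd : 0 < d)
    (h : ∀ x ∈ T, ∀ y ∈ T, ∃ a : ℤ, (x - y) * d = a) : T.card ≤ d := by
  have : T.card ≤ (Finset.Icc 1 d).card := by
    refine Finset.card_le_card_of_injOn (fun x => ⌈x * d⌉₊) ?_ ?_
    · intro x hx
      obtain ⟨h0, h1⟩ := h01 x hx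
      have hd' : (0:ℝ) < d := by exact_mod_cast hd
      simp only [Finset.coe_Icc, Set.mem_Icc]
      constructor
      · exact Nat.one_le_iff_ne_zero.2 (Nat.ceil_pos.2 (mul_pos h0 hd')).ne'
      · rw [Nat.ceil_le]; nlinarith
    · intro x hx y hy hxy
      have hd' : (0:ℝ) < d := by exact_mod_cast hd
      obtain ⟨a, ha⟩ := h x hx y hy
      have hx0 := (mul_pos (h01 x hx).1 hd')
      have hy0 := (mul_pos (h01 y hy).1 hd')
      have b1 := Nat.ceil_lt_add_one hx0.le
      have b2 := Nat.ceil_lt_add_one hy0.le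
      have b3 := Nat.le_ceil (x * d)
      have b4 := Nat.le_ceil (y * d)
      simp only at hxy
      rw [hxy] at b1 b3
      have c1 : (a : ℝ) < 1 := by rw [← ha]; linarith
      have c2 : (-1 : ℝ) < a := by rw [← ha]; linarith
      have : a = 0 := by
        have c1 : a < 1 := by exact_mod_cast c1
        have c2 : -1 < a := by exact_mod_cast c2
        omega
      rw [this] at ha
      simp only [Int.cast_zero, mul_eq_zero] at ha
      rcases ha with ha | ha
      · linarith
      · exact absurd ha hd'.ne'
  simpa using this

lemma tau_sum (X : ℕ) : ∀ k : ℕ, ∑ n ∈ Finset.Icc 1 X, ((n.divisors.card : ℝ) ^ k) / n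
    ≤ (∑ n ∈ Finset.Icc 1 X, (1 : ℝ) / n) ^ (2 ^ k) := by
  intro k
  induction k with
  | zero => simp
  | succ k ih =>
    have hnn : 0 ≤ ∑ n ∈ Finset.Icc 1 X, ((n.divisors.card : ℝ) ^ k) / n :=
      Finset.sum_nonneg fun _ _ => by positivity
    refine le_trans ?_ ((pow_le_pow_left₀ hnn ih 2).trans_eq (by rw [← pow_mul, pow_succ]))
    rw [sq, Finset.sum_mul_sum, ← Finset.sum_product']
    have h1 : ∀ n ∈ Finset.Icc 1 X, ((n.divisors.card : ℝ) ^ (k + 1)) / n ≤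
        ∑ p ∈ n.divisorsAntidiagonal, ((p.1.divisors.card : ℝ) ^ k / p.1) * ((p.2.divisors.card : ℝ) ^ k / p.2) := by
      intro n hn
      have hcard : (n.divisors.card : ℝ) = ∑ p ∈ n.divisorsAntidiagonal, (1:ℝ) := by
        rw [Finset.sum_const, nsmul_eq_mul, mul_one, ← Nat.map_div_right_divisors, Finset.card_map]
      rw [pow_succ, mul_div_right_comm]
      nth_rewrite 2 [hcard]
      rw [Finset.mul_sum]
      refine Finset.sum_le_sum fun p hp => ?_
      have hp' := (Nat.mem_divisorsAntidiagonal.1 hp).1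
      have : n.divisors.card ≤ p.1.divisors.card * p.2.divisors.card := by
        rw [← hp', Nat.divisors_mul]
        exact Finset.card_mul_le
      rw [mul_one, div_mul_div_comm, ← mul_pow]
      have e : (p.1 : ℝ) * p.2 = n := by exact_mod_cast hp'
      rw [e]
      gcongr
      exact_mod_cast this
    refine (Finset.sum_le_sum h1).trans ?_
    rw [Finset.sum_sigma']
    rw [← Finset.sum_image (s := (Finset.Icc 1 X).sigma fun n => n.divisorsAntidiagonal)
      (g := fun z => z.2) (f := fun p : ℕ × ℕ =>
        ((p.1.divisors.card : ℝ) ^ k / p.1) * ((p.2.divisors.card : ℝ) ^ k / p.2))]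
    · refine Finset.sum_le_sum_of_subset_of_nonneg ?_ fun _ _ _ => by positivity
      intro p hp
      obtain ⟨⟨n, p⟩, hz, rfl⟩ := Finset.mem_image.1 hp
      obtain ⟨hn, hp⟩ := Finset.mem_sigma.1 hz
      obtain ⟨h, h0⟩ := Nat.mem_divisorsAntidiagonal.1 hp
      have hn := Finset.mem_Icc.1 hn
      simp only at h h0 hn ⊢
      rw [Finset.mem_product, Finset.mem_Icc, Finset.mem_Icc]
      have hn0 : 0 < n := Nat.pos_of_ne_zero h0
      have d1 : p.1 ∣ n := ⟨_, h.symm⟩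
      have d2 : p.2 ∣ n := ⟨p.1, by rw [mul_comm]; exact h.symm⟩
      exact ⟨⟨Nat.pos_of_dvd_of_pos d1 hn0, (Nat.le_of_dvd hn0 d1).trans hn.2⟩,
        ⟨Nat.pos_of_dvd_of_pos d2 hn0, (Nat.le_of_dvd hn0 d2).trans hn.2⟩⟩
    · rintro ⟨n, p⟩ hz ⟨n', p'⟩ hz' hpp
      have h := (Nat.mem_divisorsAntidiagonal.1 (Finset.mem_sigma.1 hz).2).1
      have h' := (Nat.mem_divisorsAntidiagonal.1 (Finset.mem_sigma.1 hz').2).1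
      simp only at h h' hpp
      subst hpp
      rw [h] at h'
      subst h'
      rfl

lemma lcm_sum (k R : ℕ) : ∑ q ∈ Fintype.piFinset (fun _ : Fin k => Finset.Icc 1 R),
    (1 : ℝ) / (Finset.univ.lcm q : ℕ) ≤ (1 + k * Real.log R) ^ (2 ^ k) := by
  have hmap : ∀ q ∈ Fintype.piFinset (fun _ : Fin k => Finset.Icc 1 R),
      Finset.univ.lcm q ∈ Finset.Icc 1 (R ^ k) := by
    intro q hq
    have hq := Fintype.mem_piFinset.1 hq
    have hpos : 0 < ∏ i, q i := Finset.prod_pos fun i _ => (Finset.mem_Icc.1 (hq i)).1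
    have hd : Finset.univ.lcm q ∣ ∏ i, q i := Finset.lcm_dvd fun i hi => Finset.dvd_prod_of_mem q hi
    rw [Finset.mem_Icc]
    refine ⟨Nat.pos_of_dvd_of_pos hd hpos, (Nat.le_of_dvd hpos hd).trans ?_⟩
    calc _ ≤ ∏ _i : Fin k, R := Finset.prod_le_prod' fun i _ => (Finset.mem_Icc.1 (hq i)).2
      _ = _ := by simp
  rw [← Finset.sum_fiberwise_of_maps_to hmap]
  have h1 : ∀ n ∈ Finset.Icc 1 (R ^ k), ∑ q ∈ Fintype.piFinset (fun _ : Fin k => Finset.Icc 1 R) with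
      Finset.univ.lcm q = n, (1 : ℝ) / (Finset.univ.lcm q : ℕ) ≤ ((n.divisors.card : ℝ) ^ k) / n := by
    intro n hn
    rw [Finset.sum_congr rfl (g := fun _ => (1:ℝ) / n) (fun q hq => by rw [(Finset.mem_filter.1 hq).2])]
    rw [Finset.sum_const, nsmul_eq_mul, mul_one_div]
    gcongr
    have : ((Fintype.piFinset (fun _ : Fin k => Finset.Icc 1 R)).filter (fun q => Finset.univ.lcm q = n)).card
        ≤ (Fintype.piFinset (fun _ : Fin k => n.divisors)).card := by
      refine Finset.card_le_card fun q hq => ?_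
      rw [Fintype.mem_piFinset]
      intro i
      rw [Nat.mem_divisors]
      have := (Finset.mem_filter.1 hq).2
      refine ⟨this ▸ Finset.dvd_lcm (Finset.mem_univ i), ?_⟩
      have := (Finset.mem_Icc.1 hn).1
      omega
    rw [Fintype.card_piFinset] at this
    simp only [Finset.prod_const, Finset.card_univ, Fintype.card_fin] at this
    exact_mod_cast this
  refine (Finset.sum_le_sum h1).trans ((tau_sum _ _).trans ?_)
  have h2 := harmonic_le_one_add_log (R ^ k)
  rw [harmonic_eq_sum_Icc] at h2
  push_cast at h2
  rw [Real.log_pow] at h2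
  refine pow_le_pow_left₀ (Finset.sum_nonneg fun _ _ => by positivity) ?_ _
  simpa [one_div] using h2

lemma int_of_sum {ι : Type*} [Fintype ι] [DecidableEq ι] (f : ι → ℝ) (i : ι)
    (hs : ∃ z : ℤ, ∑ j, f j = z) (h : ∀ j, j ≠ i → ∃ z : ℤ, f j = z) : ∃ z : ℤ, f i = z := by
  have key : f i ∈ (Int.castAddHom ℝ).range := by
    have e : f i = ∑ j, f j - ∑ j ∈ Finset.univ.erase i, f j := by
      rw [← Finset.add_sum_erase _ _ (Finset.mem_univ i)]; ring
    rw [e]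
    refine sub_mem ?_ (sum_mem fun j hj => ?_)
    · obtain ⟨z, hz⟩ := hs; exact ⟨z, hz.symm⟩
    · obtain ⟨z, hz⟩ := h j (Finset.ne_of_mem_erase hj); exact ⟨z, hz.symm⟩
  obtain ⟨z, hz⟩ := key
  exact ⟨z, hz.symm⟩

open Classical in
lemma fiber_bound (k : ℕ) (X : Finset (Fin k → ℝ)) (hX : X.Nonempty) (q : Fin k → ℕ) (n : ℕ)
    (ε : Fin k → ℤ) (hε : ∀ i, ε i * ε i = 1)
    (hden : ∀ x ∈ X, ∀ i, den (x i) = q i) (hq : ∀ i, 0 < q i)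
    (hint : ∀ x ∈ X, ∀ i, ∃ a : ℤ, x i * q i = a)
    (h01 : ∀ x ∈ X, ∀ i, 0 < x i ∧ x i ≤ 1)
    (hsum : ∀ x ∈ X, ∃ z : ℤ, ∑ i, (ε i : ℝ) * x i = z)
    (hn : ∀ i, (X.image (fun x => x i)).card ≤ n) :
    (X.card : ℝ) ^ 2 * ((Finset.univ.lcm q : ℕ) : ℝ) ^ 2 ≤ n ^ k * ∏ i, (q i : ℝ) := by
  let G : Fin k → ℕ := fun i => (Finset.univ.filter (fun j => i < j)).lcm q
  let H : Fin k → ℕ := fun i => (Finset.univ.filter (fun j => j < i)).lcm q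
  have hG : ∀ i j, i < j → q j ∣ G i := fun i j h =>
    Finset.dvd_lcm (Finset.mem_filter.2 ⟨Finset.mem_univ _, h⟩)
  have hH : ∀ i j, j < i → q j ∣ H i := fun i j h =>
    Finset.dvd_lcm (Finset.mem_filter.2 ⟨Finset.mem_univ _, h⟩)
  have sgn : ∀ i (t : ℝ), (∃ z : ℤ, ε i * t = z) → ∃ z : ℤ, t = z := by
    rintro i t ⟨z, hz⟩
    refine ⟨ε i * z, ?_⟩
    have : (ε i : ℝ) * ε i = 1 := by exact_mod_cast hε i
    push_cast
    rw [← hz, ← mul_assoc, this, one_mul]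
  have hdvd : ∀ i, q i ∣ Nat.lcm (G i) (H i) := by
    intro i
    obtain ⟨x, hx⟩ := hX
    rw [← hden x hx i]
    refine den_dvd (by rw [hden x hx i]; exact hq i) (by rw [hden x hx i]; exact hint x hx i) ?_
    refine sgn i _ ?_
    refine int_of_sum (fun j => (ε j : ℝ) * (x j * (Nat.lcm (G i) (H i) : ℕ))) i ?_ ?_
    · obtain ⟨z, hz⟩ := hsum x hx
      refine ⟨z * (Nat.lcm (G i) (H i) : ℕ), ?_⟩
      rw [Int.cast_mul, ← hz, Finset.sum_mul, Int.cast_natCast]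
      exact Finset.sum_congr rfl fun j _ => by ring
    · intro j hj
      have : q j ∣ Nat.lcm (G i) (H i) := by
        rcases lt_or_gt_of_ne hj with h | h
        · exact (hH i j h).trans (Nat.dvd_lcm_right _ _)
        · exact (hG i j h).trans (Nat.dvd_lcm_left _ _)
      obtain ⟨a, ha⟩ := int_dvd this (hint x hx j)
      exact ⟨ε j * a, by simp only [ha]; push_cast; ring⟩
  -- determination
  have hdet : ∀ x ∈ X, ∀ y ∈ X, ∀ i, ∀ M : ℕ, (∀ j, j ≠ i → y j = x j ∨ q j ∣ M) →
      Int.fract (y i * M) = Int.fract (x i * M) := by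
    intro x hx y hy i M h
    rw [Int.fract_eq_fract]
    refine sgn i _ ?_
    refine int_of_sum (fun j => (ε j : ℝ) * (y j * M - x j * M)) i ?_ ?_
    · obtain ⟨z, hz⟩ := hsum x hx
      obtain ⟨w, hw⟩ := hsum y hy
      refine ⟨(w - z) * (M : ℤ), ?_⟩
      rw [Int.cast_mul, Int.cast_sub, ← hz, ← hw, ← Finset.sum_sub_distrib, Finset.sum_mul,
        Int.cast_natCast]
      exact Finset.sum_congr rfl fun j _ => by ring
    · intro j hj
      rcases h j hj with h | h
      · exact ⟨0, by simp [h]⟩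
      · obtain ⟨a, ha⟩ := int_dvd h (hint x hx j)
        obtain ⟨b, hb⟩ := int_dvd h (hint y hy j)
        exact ⟨ε j * (b - a), by simp only [ha, hb]; push_cast; ring⟩
  have main := aux_entropy k X hX (fun i b => Int.fract (b * (G i : ℝ)))
    (fun i b => Int.fract (b * (H i : ℝ))) n
    (fun i => Nat.gcd (Nat.gcd (q i) (G i)) (Nat.gcd (q i) (H i)))
    (fun x hx y hy i h => hdet x hx y hy i (G i) fun j hj => by
      rcases lt_or_gt_of_ne hj with h' | h'
      · exact Or.inl (h j h')
      · exact Or.inr (hG i j h'))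
    (fun x hx y hy i h => hdet x hx y hy i (H i) fun j hj => by
      rcases lt_or_gt_of_ne hj with h' | h'
      · exact Or.inr (hH i j h')
      · exact Or.inl (h j h'))
    hn ?_
  · have e := aux_gcd q hq hdvd
    rw [Finset.prod_mul_distrib] at main
    simp only [Finset.prod_const, Finset.card_univ, Fintype.card_fin] at main
    have e' : (∏ i, ((Nat.gcd (Nat.gcd (q i) (G i)) (Nat.gcd (q i) (H i)) : ℕ) : ℝ)) *
      ((Finset.univ.lcm q : ℕ) : ℝ) ^ 2 = ∏ i, (q i : ℝ) := by exact_mod_cast e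
    rw [← e', ← mul_assoc]
    exact mul_le_mul_of_nonneg_right main (by positivity)
  · intro i l f
    refine card_le_d _ _ ?_ (Nat.gcd_pos_of_pos_left _ (Nat.gcd_pos_of_pos_left _ (hq i))) ?_
    · intro b hb
      obtain ⟨x, hx, rfl⟩ := Finset.mem_image.1 (Finset.mem_filter.1 hb).1
      exact h01 x hx i
    · intro b hb b' hb'
      obtain ⟨hbX, h1, h2⟩ := Finset.mem_filter.1 hb
      obtain ⟨hbX', h1', h2'⟩ := Finset.mem_filter.1 hb'
      obtain ⟨x, hx, rfl⟩ := Finset.mem_image.1 hbX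
      obtain ⟨y, hy, rfl⟩ := Finset.mem_image.1 hbX'
      rw [← h1', Int.fract_eq_fract] at h1
      rw [← h2', Int.fract_eq_fract] at h2
      simp only [← sub_mul] at h1 h2
      have h3 : ∃ a : ℤ, (x i - y i) * q i = a := by
        obtain ⟨a, ha⟩ := hint x hx i
        obtain ⟨b, hb⟩ := hint y hy i
        exact ⟨a - b, by rw [sub_mul, ha, hb]; push_cast; ring⟩
      exact int_gcd (int_gcd h3 h1) (int_gcd h3 h2)

lemma final_num (Q : ℝ) (hQ : 4 ≤ Q) (m : ℕ) (hm : 2 ≤ m) :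
    (1 + ((2 * m : ℕ) : ℝ) * Real.log (⌊Q⌋₊ : ℕ)) ^ (2 ^ (2 * m)) ≤ Real.log Q ^ ((32 : ℝ) ^ m) := by
  have hL : (4 / 3 : ℝ) ≤ Real.log Q := by
    have h1 : Real.log 4 ≤ Real.log Q := Real.log_le_log (by norm_num) hQ
    have h2 : Real.log 4 = 2 * Real.log 2 := by
      rw [show (4:ℝ) = 2 ^ 2 by norm_num, Real.log_pow]; norm_num
    have := Real.log_two_gt_d9
    linarith
  have hR : Real.log (⌊Q⌋₊ : ℕ) ≤ Real.log Q := by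
    refine Real.log_le_log ?_ (Nat.floor_le (by linarith))
    exact_mod_cast Nat.floor_pos.2 (by linarith)
  have hR0 : 0 ≤ Real.log (⌊Q⌋₊ : ℕ) := Real.log_natCast_nonneg _
  set L := Real.log Q
  have h4 : ∀ m : ℕ, 2 * m + 1 ≤ 4 ^ m := by
    intro m
    induction m with
    | zero => simp
    | succ k ih => rw [pow_succ]; omega
  have h8 : ∀ m : ℕ, 2 ≤ m → 6 * m + 1 ≤ 8 ^ m := by
    intro m hm
    induction m, hm using Nat.le_induction with
    | base => norm_num
    | succ k _ ih => rw [pow_succ]; omega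
  have b1 : 1 + ((2 * m : ℕ) : ℝ) * Real.log (⌊Q⌋₊ : ℕ) ≤ L ^ (6 * m + 1) := by
    calc _ ≤ L + ((2 * m : ℕ) : ℝ) * L := by
          refine add_le_add (by linarith) (mul_le_mul_of_nonneg_left hR (by positivity))
      _ = ((2 * m + 1 : ℕ) : ℝ) * L := by push_cast; ring
      _ ≤ ((4 ^ m : ℕ) : ℝ) * L := by
          refine mul_le_mul_of_nonneg_right ?_ (by linarith)
          exact_mod_cast h4 m
      _ ≤ (L ^ 6) ^ m * L := by
          refine mul_le_mul_of_nonneg_right ?_ (by linarith)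
          push_cast
          refine pow_le_pow_left₀ (by norm_num) ?_ _
          calc (4:ℝ) ≤ (4 / 3) ^ 6 := by norm_num
            _ ≤ _ := pow_le_pow_left₀ (by norm_num) hL 6
      _ = _ := by rw [← pow_mul, ← pow_succ]
  calc _ ≤ (L ^ (6 * m + 1)) ^ (2 ^ (2 * m)) :=
        pow_le_pow_left₀ (by positivity) b1 _
    _ = L ^ ((6 * m + 1) * 2 ^ (2 * m)) := by rw [← pow_mul]
    _ ≤ L ^ (32 ^ m) := by
        refine pow_le_pow_right₀ (by linarith) ?_
        calc _ ≤ 8 ^ m * 2 ^ (2 * m) := Nat.mul_le_mul_right _ (h8 m hm)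
          _ = 32 ^ m := by rw [pow_mul, ← mul_pow]; norm_num
    _ = _ := by rw [← Real.rpow_natCast]; push_cast; rfl


open scoped Classical in
/-- Lemma 6.2 (additive energy of rationals with small denominators, after Bloom–Maynard):
if `S ⊆ 𝕋` consists of fractions `a/q` with `1 ≤ a ≤ q ≤ Q`, lies in an interval of length
`1/8m`, and has at most `n` elements of any given denominator `q ≤ Q`, then
`E_{2m}(S;0) ≤ (log Q)^{C^m}·(Qn)^m`. -/
theorem stmt18 :
    ∃ C : ℝ, 0 < C ∧
      ∀ Q : ℝ, 4 ≤ Q → ∀ m : ℕ, 2 ≤ m → ∀ n : ℕ, 0 < n → ∀ S : Finset ℝ,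
        (∀ x ∈ S, ∃ a q : ℕ, 1 ≤ a ∧ a ≤ q ∧ (q : ℝ) ≤ Q ∧ x = (a : ℝ) / q) →
        (∃ t : ℝ, ∀ x ∈ S, torusNorm (x - t) ≤ 1 / (16 * m)) →
        (∀ q : ℕ, (q : ℝ) ≤ Q → (S.filter (fun x => den x = q)).card ≤ n) →
        (energy m S 0 : ℝ) ≤ Real.log Q ^ (C ^ m) * (Q * n) ^ m := by
  refine ⟨32, by norm_num, ?_⟩
  intro Q hQ m hm n hn S hS _ hcard
  set R := ⌊Q⌋₊ with hR
  have hspec : ∀ x ∈ S, (0 < x ∧ x ≤ 1) ∧ 0 < den x ∧ (∃ a : ℤ, x * den x = a) ∧ den x ≤ R := by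
    intro x hx
    obtain ⟨a, q, ha, haq, hqQ, rfl⟩ := hS x hx
    have hq : 0 < q := by omega
    have hq' : (0:ℝ) < q := by exact_mod_cast hq
    have ha' : (0:ℝ) < a := by exact_mod_cast ha
    obtain ⟨h1, h2, h3⟩ := den_spec (x := (a:ℝ)/q) hq ⟨a, by field_simp; simp⟩
    refine ⟨⟨div_pos ha' hq', (div_le_one hq').2 (by exact_mod_cast haq)⟩, h1, h2,
      h3.trans (Nat.le_floor hqQ)⟩
  let ε : Fin (2 * m) → ℤ := fun i => if (i : ℕ) < m then 1 else -1
  set E := (Fintype.piFinset fun _ : Fin (2 * m) => S).filter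
    (fun b => torusNorm (∑ i : Fin (2 * m), if (i : ℕ) < m then b i else -b i) ≤ 0) with hE
  have hEc : energy m S 0 = E.card := rfl
  have hsum : ∀ x ∈ E, ∃ z : ℤ, ∑ i, (ε i : ℝ) * x i = z := by
    intro x hx
    have h := (Finset.mem_filter.1 hx).2
    have h := abs_nonpos_iff.1 h
    refine ⟨round (∑ i : Fin (2 * m), if (i : ℕ) < m then x i else -x i), ?_⟩
    rw [← sub_eq_zero.1 h]
    refine Finset.sum_congr rfl fun i _ => ?_
    by_cases hi : (i : ℕ) < m <;> simp [ε, hi]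
  have hES : ∀ x ∈ E, ∀ i, x i ∈ S := fun x hx =>
    Fintype.mem_piFinset.1 (Finset.mem_filter.1 hx).1
  have hmaps : ∀ x ∈ E, (fun i => den (x i)) ∈
      Fintype.piFinset (fun _ : Fin (2 * m) => Finset.Icc 1 R) := by
    intro x hx
    rw [Fintype.mem_piFinset]
    intro i
    have := hspec _ (hES x hx i)
    exact Finset.mem_Icc.2 ⟨this.2.1, this.2.2.2⟩
  have hQ0 : 0 ≤ Q := by linarith
  have hfib : ∀ q ∈ Fintype.piFinset (fun _ : Fin (2 * m) => Finset.Icc 1 R),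
      ((E.filter (fun x => (fun i => den (x i)) = q)).card : ℝ)
        ≤ (Q * n) ^ m * (1 / (Finset.univ.lcm q : ℕ)) := by
    intro q hq
    have hq := fun i => Finset.mem_Icc.1 (Fintype.mem_piFinset.1 hq i)
    rcases (E.filter (fun x => (fun i => den (x i)) = q)).eq_empty_or_nonempty with h0 | h0
    · rw [h0]; simp only [Finset.card_empty, Nat.cast_zero]; positivity
    have hlpos : 0 < ((Finset.univ.lcm q : ℕ) : ℝ) := by
      have : Finset.univ.lcm q ≠ 0 := by
        rw [Ne, Finset.lcm_eq_zero_iff]; rintro ⟨j, _, hj⟩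
        have := (hq j).1
        omega
      exact_mod_cast Nat.pos_of_ne_zero this
    have hd : ∀ x ∈ E.filter (fun x => (fun i => den (x i)) = q), ∀ i, den (x i) = q i :=
      fun x hx i => congrFun (Finset.mem_filter.1 hx).2 i
    have hm' : ∀ x ∈ E.filter (fun x => (fun i => den (x i)) = q), x ∈ E :=
      fun x hx => (Finset.mem_filter.1 hx).1
    have hqQ : ∀ i, (q i : ℝ) ≤ Q := fun i => (Nat.le_floor_iff hQ0).1 (hq i).2
    have key := fiber_bound (2 * m) _ h0 q n ε
      (fun i => by by_cases hi : (i : ℕ) < m <;> simp [ε, hi]) hd (fun i => (hq i).1)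
      (fun x hx i => by rw [← hd x hx i]; exact (hspec _ (hES x (hm' x hx) i)).2.2.1)
      (fun x hx i => (hspec _ (hES x (hm' x hx) i)).1)
      (fun x hx => hsum x (hm' x hx))
      (fun i => by
        refine le_trans (Finset.card_le_card ?_) (hcard (q i) (hqQ i))
        intro b hb
        obtain ⟨x, hx, rfl⟩ := Finset.mem_image.1 hb
        exact Finset.mem_filter.2 ⟨hES x (hm' x hx) i, hd x hx i⟩)
    have hprod : ∏ i, (q i : ℝ) ≤ Q ^ (2 * m) := by
      calc _ ≤ ∏ _i : Fin (2 * m), Q :=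
            Finset.prod_le_prod (fun _ _ => Nat.cast_nonneg _) (fun i _ => hqQ i)
        _ = _ := by simp
    rw [mul_one_div, le_div_iff₀ hlpos]
    refine le_of_sq_le_sq ?_ (by positivity)
    rw [mul_pow]
    refine key.trans ?_
    calc _ ≤ (n : ℝ) ^ (2 * m) * Q ^ (2 * m) := mul_le_mul_of_nonneg_left hprod (by positivity)
      _ = _ := by rw [← pow_mul, mul_comm m 2, mul_pow]; ring
  rw [hEc, Finset.card_eq_sum_card_fiberwise hmaps]
  push_cast
  refine (Finset.sum_le_sum hfib).trans ?_
  rw [← Finset.mul_sum, mul_comm]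
  exact mul_le_mul_of_nonneg_right ((lcm_sum (2 * m) R).trans (final_num Q hQ m hm)) (by positivity)
end
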